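/- arXiv:2101.02610 — 2 statements merged into one kernel-verified Lean document; each statement's English description precedes it below -/
import Mathlib

section
/- Let (X, d, T) be a topological dynamical system. Then the upper metric mean dimension satisfies mdim̄_M(X,d,T) = limsup_{ε→0} (1/log(1/ε)) · sup_{μ ∈ E_T(X)} h_μ^{BK}(ε), where h_μ^{BK}(ε) denotes the μ-essential supremum of x ↦ h_μ^{BK}(x,ε) (this function is μ-a.e. constant for ergodic μ). -/
open Filter MeasureTheory Set Topology

variable {X : Type*}

/-- The dynamical (Bowen) metric `d_n(x,y) = max_{0 ≤ k ≤ n-1} d(T^k x, T^k y)`. -/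
noncomputable def dynDist [MetricSpace X] (T : X → X) (n : ℕ) (x y : X) : ℝ :=
  ⨆ k ∈ Finset.range n, dist (T^[k] x) (T^[k] y)

/-- The open dynamical ball `B_n(x, ε) = {y : d_n(x,y) < ε}`. -/
def dynBall [MetricSpace X] (T : X → X) (n : ℕ) (x : X) (ε : ℝ) : Set X :=
  {y | dynDist T n x y < ε}

/-- `s_n(K, ε)`: the maximal cardinality of an `(n,ε)`-separated subset of `K`. -/
noncomputable def sepNum [MetricSpace X] (T : X → X) (n : ℕ) (K : Set X) (ε : ℝ) : ℕ :=
  sSup {m | ∃ E : Finset X, ↑E ⊆ K ∧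
    (∀ x ∈ E, ∀ y ∈ E, x ≠ y → ε < dynDist T n x y) ∧ E.card = m}

/-- `S(K, ε) = limsup_n (1/n) log s_n(K, ε)`. -/
noncomputable def sepEnt [MetricSpace X] (T : X → X) (K : Set X) (ε : ℝ) : EReal :=
  limsup (fun n : ℕ => ((Real.log (sepNum T n K ε) / n : ℝ) : EReal)) atTop

/-- `r_n(K, ε)`: the minimal cardinality of an `(n,ε)`-spanning set for `K`. -/
noncomputable def spanNum [MetricSpace X] (T : X → X) (n : ℕ) (K : Set X) (ε : ℝ) : ℕ :=
  sInf {m | ∃ F : Finset X, (∀ x ∈ K, ∃ y ∈ F, dynDist T n x y ≤ ε) ∧ F.card = m}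

/-- `R(K, ε) = limsup_n (1/n) log r_n(K, ε)`. -/
noncomputable def spanEnt [MetricSpace X] (T : X → X) (K : Set X) (ε : ℝ) : EReal :=
  limsup (fun n : ℕ => ((Real.log (spanNum T n K ε) / n : ℝ) : EReal)) atTop

/-- Upper metric mean dimension. -/
noncomputable def mdimUpper [MetricSpace X] (T : X → X) : EReal :=
  limsup (fun ε : ℝ => sepEnt T univ ε / ((Real.log (1 / ε) : ℝ) : EReal)) (𝓝[>] (0:ℝ))

/-- Lower metric mean dimension. -/
noncomputable def mdimLower [MetricSpace X] (T : X → X) : EReal :=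
  liminf (fun ε : ℝ => sepEnt T univ ε / ((Real.log (1 / ε) : ℝ) : EReal)) (𝓝[>] (0:ℝ))

/-- The ergodic `T`-invariant Borel probability measures. -/
def ergodicMeasures [MeasurableSpace X] (T : X → X) : Set (Measure X) :=
  {μ | IsProbabilityMeasure μ ∧ Ergodic T μ}

/-- `U` is a finite open cover of `X`. -/
def IsFiniteOpenCover [TopologicalSpace X] (U : Finset (Set X)) : Prop :=
  (∀ V ∈ U, IsOpen V) ∧ ⋃₀ (U : Set (Set X)) = univ

/-- The cover `U^n = ⋁_{i=0}^{n-1} T^{-i} U`. -/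
def dynRefine (T : X → X) (U : Finset (Set X)) (n : ℕ) : Set (Set X) :=
  {V | ∃ f : Fin n → Set X, (∀ i, f i ∈ U) ∧ V = ⋂ i : Fin n, T^[(i : ℕ)] ⁻¹' f i}

/-- `N(C)`: the minimal cardinality of a subcover of `C`. -/
noncomputable def coverNum (C : Set (Set X)) : ℕ :=
  sInf {m | ∃ F : Finset (Set X), ↑F ⊆ C ∧ ⋃₀ (F : Set (Set X)) = univ ∧ F.card = m}

/-- `N_μ(U^n, δ)`: minimal number of members of `U^n` needed to cover a set of measure ≥ δ. -/
noncomputable def shapiraNum [MeasurableSpace X] (T : X → X) (μ : Measure X)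
    (U : Finset (Set X)) (n : ℕ) (δ : ℝ) : ℕ :=
  sInf {m | ∃ F : Finset (Set X), ↑F ⊆ dynRefine T U n ∧
    ENNReal.ofReal δ ≤ μ (⋃₀ (F : Set (Set X))) ∧ F.card = m}

/-- Shapira's entropy `h_μ^S(U, δ) = limsup_n (1/n) log N_μ(U^n, δ)`. -/
noncomputable def shapiraEnt [MeasurableSpace X] (T : X → X) (μ : Measure X)
    (U : Finset (Set X)) (δ : ℝ) : EReal :=
  limsup (fun n : ℕ => ((Real.log (shapiraNum T μ U n δ) / n : ℝ) : EReal)) atTop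

/-- `N_μ^δ(n, ε)`: smallest number of open `(n,ε)`-dynamical balls whose union has
measure `> δ`. -/
noncomputable def katokNum [MetricSpace X] [MeasurableSpace X] (T : X → X) (μ : Measure X)
    (n : ℕ) (ε δ : ℝ) : ℕ :=
  sInf {m | ∃ F : Finset X, ENNReal.ofReal δ < μ (⋃ x ∈ F, dynBall T n x ε) ∧ F.card = m}

/-- Katok's entropy `h_μ^K(ε, δ) = limsup_n (1/n) log N_μ^δ(n, ε)`. -/
noncomputable def katokEnt [MetricSpace X] [MeasurableSpace X] (T : X → X) (μ : Measure X)
    (ε δ : ℝ) : EReal :=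
  limsup (fun n : ℕ => ((Real.log (katokNum T μ n ε δ) / n : ℝ) : EReal)) atTop

/-- Lower Katok entropy `h̲_μ^K(ε, δ) = liminf_n (1/n) log N_μ^δ(n, ε)`. -/
noncomputable def katokEntLower [MetricSpace X] [MeasurableSpace X] (T : X → X) (μ : Measure X)
    (ε δ : ℝ) : EReal :=
  liminf (fun n : ℕ => ((Real.log (katokNum T μ n ε δ) / n : ℝ) : EReal)) atTop

/-- `Ñ_μ^δ(n, ε)`: smallest number of sets of `d_n`-diameter ≤ ε whose union has
measure `> δ`. -/
noncomputable def katokNumTilde [MetricSpace X] [MeasurableSpace X] (T : X → X) (μ : Measure X)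
    (n : ℕ) (ε δ : ℝ) : ℕ :=
  sInf {m | ∃ F : Finset (Set X), (∀ A ∈ F, ∀ x ∈ A, ∀ y ∈ A, dynDist T n x y ≤ ε) ∧
    ENNReal.ofReal δ < μ (⋃₀ (F : Set (Set X))) ∧ F.card = m}

/-- Brin–Katok local entropy `h_μ^{BK}(x, ε) = limsup_n -(1/n) log μ(B_n(x, ε))`. -/
noncomputable def brinKatok [MetricSpace X] [MeasurableSpace X] (T : X → X) (μ : Measure X)
    (x : X) (ε : ℝ) : EReal :=
  limsup (fun n : ℕ => -(ENNReal.log (μ (dynBall T n x ε))) / (n : EReal)) atTop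

/-- Lower Brin–Katok local entropy `h̲_μ^{BK}(x, ε) = liminf_n -(1/n) log μ(B_n(x, ε))`. -/
noncomputable def brinKatokLower [MetricSpace X] [MeasurableSpace X] (T : X → X) (μ : Measure X)
    (x : X) (ε : ℝ) : EReal :=
  liminf (fun n : ℕ => -(ENNReal.log (μ (dynBall T n x ε))) / (n : EReal)) atTop

/-- Local entropy function `h_d(x, ε) = inf { S(K, ε) : K closed neighborhood of x }`. -/
noncomputable def locEnt [MetricSpace X] (T : X → X) (x : X) (ε : ℝ) : EReal :=
  ⨅ K ∈ {K : Set X | IsClosed K ∧ K ∈ 𝓝 x}, sepEnt T K ε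

/-- Local spanning entropy `h̃_d(x, ε) = inf { R(K, ε) : K closed neighborhood of x }`. -/
noncomputable def locSpanEnt [MetricSpace X] (T : X → X) (x : X) (ε : ℝ) : EReal :=
  ⨅ K ∈ {K : Set X | IsClosed K ∧ K ∈ 𝓝 x}, spanEnt T K ε

/-- `U_x^n`: the union of all cells of `U^n` containing `x`. -/
def dynCoverCell (T : X → X) (U : Finset (Set X)) (n : ℕ) (x : X) : Set X :=
  ⋃₀ {V | V ∈ dynRefine T U n ∧ x ∈ V}


/-- `Y` is covered by at most `r` sets of `d_n`-diameter at most `ρ`. -/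
def MCov {X : Type*} [MetricSpace X] (T : X → X) (n : ℕ) (ρ : ℝ) (Y : Set X) (r : ℝ) : Prop :=
  ∃ F : Finset (Set X), (F.card : ℝ) ≤ r ∧ Y ⊆ ⋃₀ (F : Set (Set X)) ∧
    ∀ A ∈ F, ∀ x ∈ A, ∀ y ∈ A, ∀ k < n, dist (T^[k] x) (T^[k] y) ≤ ρ

theorem MCov.mono {X : Type*} [MetricSpace X] {T : X → X} {n : ℕ} {ρ : ℝ} {Y Y' : Set X}
    {r r' : ℝ} (h : MCov T n ρ Y r) (hY : Y' ⊆ Y) (hr : r ≤ r') : MCov T n ρ Y' r' := by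
  obtain ⟨F, h1, h2, h3⟩ := h
  exact ⟨F, h1.trans hr, hY.trans h2, h3⟩

theorem MCov.empty {X : Type*} [MetricSpace X] (T : X → X) (n : ℕ) (ρ : ℝ) :
    MCov T n ρ (∅ : Set X) 0 := ⟨∅, by simp, by simp, by simp⟩

theorem MCov.union {X : Type*} [MetricSpace X] {T : X → X} {n : ℕ} {ρ : ℝ} {Y Y' : Set X}
    {r r' : ℝ} (h : MCov T n ρ Y r) (h' : MCov T n ρ Y' r') : MCov T n ρ (Y ∪ Y') (r + r') := by
  classical
  obtain ⟨F, h1, h2, h3⟩ := h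
  obtain ⟨F', h1', h2', h3'⟩ := h'
  refine ⟨F ∪ F', ?_, ?_, ?_⟩
  · have := Finset.card_union_le F F'
    have : ((F ∪ F').card : ℝ) ≤ F.card + F'.card := by exact_mod_cast this
    linarith
  · rw [Finset.coe_union, sUnion_union]
    exact union_subset_union h2 h2'
  · intro A hA
    rcases Finset.mem_union.1 hA with h | h
    · exact h3 A h
    · exact h3' A h

theorem MCov.biUnion {X ι : Type*} [MetricSpace X] {T : X → X} {n : ℕ} {ρ : ℝ} (I : Finset ι)
    {Y : ι → Set X} {r : ι → ℝ} (h : ∀ i ∈ I, MCov T n ρ (Y i) (r i)) :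
    MCov T n ρ (⋃ i ∈ I, Y i) (∑ i ∈ I, r i) := by
  classical
  induction I using Finset.induction_on with
  | empty => simpa using MCov.empty T n ρ
  | insert a s ha ih =>
    rw [Finset.sum_insert ha, Finset.set_biUnion_insert]
    exact (h a (by simp)).union (ih fun i hi => h i (by simp [hi]))

theorem MCov.comp {X : Type*} [MetricSpace X] {T : X → X} {a b : ℕ} {ρ : ℝ} {Y Y' : Set X}
    {r r' : ℝ} (h : MCov T a ρ Y r) (h' : MCov T b ρ Y' r') :
    MCov T (a + b) ρ (Y ∩ T^[a] ⁻¹' Y') (r * r') := by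
  classical
  obtain ⟨F, h1, h2, h3⟩ := h
  obtain ⟨F', h1', h2', h3'⟩ := h'
  refine ⟨Finset.image₂ (fun A B => A ∩ T^[a] ⁻¹' B) F F', ?_, ?_, ?_⟩
  · have := Finset.card_image₂_le (fun A B => A ∩ T^[a] ⁻¹' B) F F'
    have : ((Finset.image₂ (fun A B => A ∩ T^[a] ⁻¹' B) F F').card : ℝ) ≤ F.card * F'.card := by
      exact_mod_cast this
    refine this.trans ?_
    gcongr
    exact (Nat.cast_nonneg _).trans h1
  · rintro x ⟨hx, hx'⟩
    obtain ⟨A, hA, hxA⟩ := h2 hx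
    obtain ⟨B, hB, hxB⟩ := h2' hx'
    exact ⟨_, Finset.mem_coe.2 (Finset.mem_image₂_of_mem hA hB), hxA, hxB⟩
  · intro C hC x hx y hy k hk
    obtain ⟨A, hA, B, hB, rfl⟩ := Finset.mem_image₂.1 hC
    rcases lt_or_ge k a with hka | hka
    · exact h3 A hA x hx.1 y hy.1 k hka
    · obtain ⟨j, rfl⟩ := Nat.exists_eq_add_of_le hka
      have := h3' B hB _ hx.2 _ hy.2 j (by omega)
      rwa [← Function.iterate_add_apply, ← Function.iterate_add_apply, Nat.add_comm j a] at this

theorem MCov.exists_one {X : Type*} [MetricSpace X] [CompactSpace X] (T : X → X)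
    {ρ : ℝ} (hρ : 0 < ρ) : ∃ M : ℝ, 1 ≤ M ∧ MCov T 1 ρ univ M := by
  classical
  obtain ⟨t, -, ht⟩ := (isCompact_univ (X := X)).elim_nhds_subcover (fun x => Metric.ball x (ρ / 2))
    (fun x _ => Metric.ball_mem_nhds x (by positivity))
  refine ⟨max 1 ((t.image fun x => Metric.ball x (ρ / 2)).card : ℝ), le_max_left _ _,
    t.image fun x => Metric.ball x (ρ / 2), le_max_right _ _, ?_, ?_⟩
  · intro x hx
    obtain ⟨y, hy, hxy⟩ := mem_iUnion₂.1 (ht hx)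
    exact ⟨_, by simpa using ⟨y, hy, rfl⟩, hxy⟩
  · intro A hA x hx y hy k hk
    obtain ⟨z, hz, rfl⟩ := Finset.mem_image.1 hA
    obtain rfl : k = 0 := by omega
    have h1 := Metric.mem_ball.1 hx
    have h2 := Metric.mem_ball'.1 hy
    have := dist_triangle x z y
    simp only [Function.iterate_zero, id_eq]
    linarith

theorem MCov.pow {X : Type*} [MetricSpace X] {T : X → X} {ρ M : ℝ}
    (h : MCov T 1 ρ univ M) (n : ℕ) : MCov T n ρ univ (M ^ n) := by
  induction n with
  | zero => exact ⟨{univ}, by simp, by simp, by simp⟩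
  | succ n ih =>
    rw [pow_succ]
    exact (ih.comp h).mono (by simp) le_rfl

/-- number of times `j < N` with `T^j x ∉ V`. -/
noncomputable def badCount {X : Type*} (T : X → X) (V : Set X) (N : ℕ) (x : X) : ℕ :=
  ∑ j ∈ Finset.range N, Vᶜ.indicator (fun _ => (1 : ℕ)) (T^[j] x)

theorem badCount_add {X : Type*} (T : X → X) (V : Set X) (a N : ℕ) (x : X) :
    badCount T V (a + N) x = badCount T V a x + badCount T V N (T^[a] x) := by
  unfold badCount
  rw [Finset.sum_range_add]
  congr 1
  refine Finset.sum_congr rfl fun j _ => ?_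
  rw [← Function.iterate_add_apply, Nat.add_comm]

theorem tiling {X ι : Type*} [MetricSpace X] {T : X → X} {ρ M s η : ℝ} (hM : 1 ≤ M)
    (hs : 0 ≤ s) (hη : 0 ≤ η) (h1 : MCov T 1 ρ univ M) (I : Finset ι) (ℓ : ι → ℕ)
    (hℓ : ∀ i ∈ I, 1 ≤ ℓ i) (W : ι → Set X)
    (hW : ∀ i ∈ I, MCov T (ℓ i) ρ (W i) (Real.exp (s * ℓ i)))
    (hsum : ∑ i ∈ I, Real.exp (-(η * ℓ i)) ≤ 1 / 2) :
    ∃ A : ℝ, 1 ≤ A ∧ ∀ N b : ℕ, MCov T N ρ {x | badCount T (⋃ i ∈ I, W i) N x ≤ b}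
      (A * (2 * M) ^ b * Real.exp ((s + η) * N)) := by
  classical
  set V : Set X := ⋃ i ∈ I, W i with hV
  set K := I.sup ℓ with hK
  have hA1 : (1 : ℝ) ≤ M ^ K := one_le_pow₀ hM
  refine ⟨M ^ K, hA1, ?_⟩
  intro N
  induction N using Nat.strong_induction_on with
  | _ N ih =>
  intro b
  have h2M : (1 : ℝ) ≤ (2 * M) ^ b := one_le_pow₀ (by linarith)
  have hexp : (1 : ℝ) ≤ Real.exp ((s + η) * N) := Real.one_le_exp (by positivity)
  rcases Nat.eq_zero_or_pos N with rfl | hNpos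
  · refine (h1.pow 0).mono (subset_univ _) ?_
    have := one_le_mul_of_one_le_of_one_le (one_le_mul_of_one_le_of_one_le hA1 h2M) hexp
    simpa using this
  rcases le_or_gt N K with hNK | hNK
  · refine (h1.pow N).mono (subset_univ _) ?_
    calc M ^ N ≤ M ^ K := pow_le_pow_right₀ hM hNK
      _ = M ^ K * 1 * 1 := by ring
      _ ≤ _ := by gcongr
  · -- main step
    have key : {x | badCount T V N x ≤ b} ⊆
        (if b = 0 then ∅ else (univ ∩ T^[1] ⁻¹' {x | badCount T V (N - 1) x ≤ b - 1})) ∪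
        ⋃ i ∈ I, (W i ∩ T^[ℓ i] ⁻¹' {x | badCount T V (N - ℓ i) x ≤ b}) := by
      intro x hx
      have hx : badCount T V N x ≤ b := hx
      by_cases hxV : x ∈ V
      · right
        obtain ⟨i, hi, hxi⟩ := mem_iUnion₂.1 hxV
        refine mem_iUnion₂.2 ⟨i, hi, hxi, ?_⟩
        have hle : ℓ i ≤ K := Finset.le_sup hi
        have e : N = ℓ i + (N - ℓ i) := by omega
        rw [e, badCount_add] at hx
        show badCount T V (N - ℓ i) (T^[ℓ i] x) ≤ b
        omega
      · left
        have e : N = 1 + (N - 1) := by omega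
        rw [e, badCount_add] at hx
        have h1 : badCount T V 1 x = 1 := by simp [badCount, hxV]
        have hb : b ≠ 0 := by omega
        rw [if_neg hb]
        refine ⟨mem_univ _, ?_⟩
        show badCount T V (N - 1) (T^[1] x) ≤ b - 1
        omega
    have hp1 : MCov T N ρ
        (if b = 0 then ∅ else (univ ∩ T^[1] ⁻¹' {x | badCount T V (N - 1) x ≤ b - 1}))
        (1 / 2 * (M ^ K * (2 * M) ^ b * Real.exp ((s + η) * N))) := by
      split_ifs with hb
      · exact (MCov.empty T N ρ).mono subset_rfl (by positivity)
      · have := h1.comp (ih (N - 1) (by omega) (b - 1))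
        rw [show 1 + (N - 1) = N by omega] at this
        refine this.mono subset_rfl ?_
        have e1 : Real.exp ((s + η) * ((N - 1 : ℕ) : ℝ)) ≤ Real.exp ((s + η) * N) := by
          apply Real.exp_le_exp.2
          gcongr
          omega
        have e2 : (2 * M) ^ b = 2 * M * (2 * M) ^ (b - 1) := by
          rw [← pow_succ', Nat.sub_add_cancel (Nat.pos_of_ne_zero hb)]
        rw [e2]
        calc M * (M ^ K * (2 * M) ^ (b - 1) * Real.exp ((s + η) * ((N - 1 : ℕ) : ℝ)))
            ≤ M * (M ^ K * (2 * M) ^ (b - 1) * Real.exp ((s + η) * N)) := by gcongr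
          _ = _ := by ring
    have hp2 : MCov T N ρ (⋃ i ∈ I, (W i ∩ T^[ℓ i] ⁻¹' {x | badCount T V (N - ℓ i) x ≤ b}))
        (∑ i ∈ I, Real.exp (-(η * ℓ i)) * (M ^ K * (2 * M) ^ b * Real.exp ((s + η) * N))) := by
      refine MCov.biUnion I fun i hi => ?_
      have hle : ℓ i ≤ K := Finset.le_sup hi
      have hl := hℓ i hi
      have := (hW i hi).comp (ih (N - ℓ i) (by omega) b)
      rw [show ℓ i + (N - ℓ i) = N by omega] at this
      refine this.mono subset_rfl (le_of_eq ?_)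
      rw [Nat.cast_sub (by omega)]
      have : Real.exp (s * ℓ i) * Real.exp ((s + η) * (N - ℓ i))
          = Real.exp (-(η * ℓ i)) * Real.exp ((s + η) * N) := by
        rw [← Real.exp_add, ← Real.exp_add]; congr 1; ring
      linear_combination (M ^ K * (2 * M) ^ b) * this
    refine (hp1.union hp2).mono key ?_
    rw [← Finset.sum_mul]
    have hpos : 0 ≤ M ^ K * (2 * M) ^ b * Real.exp ((s + η) * N) := by positivity
    nlinarith


theorem usc_measure_closed {X : Type*} [MetricSpace X] [MeasurableSpace X] [BorelSpace X]
    {Z : Set X} (hZ : IsClosed Z) :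
    UpperSemicontinuous (fun ν : ProbabilityMeasure X => (ν : Measure X) Z) := by
  intro ν
  refine upperSemicontinuousAt_iff_limsup_le.2 ?_
  exact ProbabilityMeasure.limsup_measure_closed_le_of_tendsto (μs := id) tendsto_id hZ

theorem le_of_convex_comb {a b m x y : ℝ} (hab : a + b = 1) (ha : 0 < a) (hb : 0 ≤ b)
    (h : m ≤ a * x + b * y) (hy : y ≤ m) : m ≤ x := by
  by_contra hx
  push Not at hx
  have h1 : 0 < a * (m - x) := mul_pos ha (by linarith)
  have h2 : 0 ≤ b * (m - y) := mul_nonneg hb (by linarith)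
  have h3 : a * m + b * m = m := by rw [← add_mul, hab, one_mul]
  nlinarith

theorem max_principle {X : Type*} [MetricSpace X] [CompactSpace X] [MeasurableSpace X]
    [BorelSpace X] {T : X → X} (hT : Continuous T) {Z : Set X} (hZ : IsClosed Z)
    (hne : ∃ ν : Measure X, IsProbabilityMeasure ν ∧ MeasurePreserving T ν ν) :
    ∃ μ ∈ ergodicMeasures T, ∀ ν : Measure X, IsProbabilityMeasure ν → MeasurePreserving T ν ν →
      ν Z ≤ μ Z := by
  classical
  let K0 : Set (ProbabilityMeasure X) :=
    {ν | ν.map hT.measurable.aemeasurable = ν}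
  have hK0 : IsCompact K0 :=
    (isClosed_eq (ProbabilityMeasure.continuous_map hT) continuous_id).isCompact
  have mem0 : ∀ ν : ProbabilityMeasure X, ν ∈ K0 ↔ MeasurePreserving T (ν : Measure X) ν := by
    intro ν
    constructor
    · intro h
      refine ⟨hT.measurable, ?_⟩
      have := congrArg ProbabilityMeasure.toMeasure h
      simpa using this
    · intro h
      apply ProbabilityMeasure.toMeasure_injective
      simpa using h.map_eq
  obtain ⟨ν0, hν0, hν0'⟩ := hne
  have hK0ne : K0.Nonempty := ⟨⟨ν0, hν0⟩, (mem0 _).2 hν0'⟩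
  obtain ⟨m, hm, hmax⟩ := UpperSemicontinuousOn.exists_isMaxOn hK0ne hK0
    ((usc_measure_closed hZ).upperSemicontinuousOn K0)
  have hmax : ∀ ν ∈ K0, (ν : Measure X) Z ≤ (m : Measure X) Z := fun ν hν => hmax hν
  let K1 : Set (ProbabilityMeasure X) := K0 ∩ {ν | (m : Measure X) Z ≤ (ν : Measure X) Z}
  have hK1 : IsCompact K1 := by
    refine hK0.inter_right ?_
    exact (usc_measure_closed hZ).isClosed_preimage ((m : Measure X) Z)
  have hK1ne : K1.Nonempty := ⟨m, hm, le_refl ((m : Measure X) Z)⟩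
  let Φ : ProbabilityMeasure X → (C(X, ℝ) → ℝ) := fun ν f => ∫ x, f x ∂(ν : Measure X)
  have hΦ : Continuous Φ := continuous_pi fun f =>
    ProbabilityMeasure.continuous_integral_continuousMap f
  have hΦinj : ∀ ν ν' : ProbabilityMeasure X, Φ ν = Φ ν' → (ν : Measure X) = ν' := by
    intro ν ν' h
    apply ext_of_forall_integral_eq_of_IsFiniteMeasure
    intro f
    exact congrFun h f.toContinuousMap
  obtain ⟨e, he⟩ := (hK1.image hΦ).extremePoints_nonempty (hK1ne.image Φ)
  obtain ⟨⟨μ, hμ, rfl⟩, hext⟩ := he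
  refine ⟨μ, ⟨inferInstance, ?_⟩, ?_⟩
  · apply Ergodic.of_mem_extremePoints
    refine ⟨⟨(mem0 _).1 hμ.1, inferInstance⟩, ?_⟩
    rintro ν1 ⟨hν1, hp1⟩ ν2 ⟨hν2, hp2⟩ ⟨a, b, ha, hb, hab, hμeq⟩
    have ha' : a ≠ ⊤ := by
      intro h; rw [h] at hab; simp at hab
    have hb' : b ≠ ⊤ := by
      intro h; rw [h] at hab; simp at hab
    let n1 : ProbabilityMeasure X := ⟨ν1, hp1⟩
    let n2 : ProbabilityMeasure X := ⟨ν2, hp2⟩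
    have m1 : n1 ∈ K0 := (mem0 _).2 hν1
    have m2 : n2 ∈ K0 := (mem0 _).2 hν2
    have hZe : (μ : Measure X) Z = a * ν1 Z + b * ν2 Z := by
      rw [← hμeq]; simp
    have l1 : ν1 Z ≤ (m : Measure X) Z := hmax n1 m1
    have l2 : ν2 Z ≤ (m : Measure X) Z := hmax n2 m2
    have hmμ : (m : Measure X) Z ≤ a * ν1 Z + b * ν2 Z := hZe ▸ hμ.2
    have hmt : (m : Measure X) Z ≠ ⊤ := measure_ne_top _ _
    have habr : a.toReal + b.toReal = 1 := by
      rw [← ENNReal.toReal_add ha' hb', hab]; simp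
    have har : 0 < a.toReal := ENNReal.toReal_pos ha.ne' ha'
    have hbr : 0 < b.toReal := ENNReal.toReal_pos hb.ne' hb'
    have t1 : ν1 Z ≠ ⊤ := measure_ne_top _ _
    have t2 : ν2 Z ≠ ⊤ := measure_ne_top _ _
    have hr : ((m : Measure X) Z).toReal ≤ a.toReal * (ν1 Z).toReal + b.toReal * (ν2 Z).toReal := by
      rw [← ENNReal.toReal_mul, ← ENNReal.toReal_mul, ← ENNReal.toReal_add
        (ENNReal.mul_ne_top ha' t1) (ENNReal.mul_ne_top hb' t2)]
      exact ENNReal.toReal_mono (ENNReal.add_ne_top.2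
        ⟨ENNReal.mul_ne_top ha' t1, ENNReal.mul_ne_top hb' t2⟩) hmμ
    have r1 := ENNReal.toReal_mono hmt l1
    have r2 := ENNReal.toReal_mono hmt l2
    have k1 : n1 ∈ K1 := by
      refine ⟨m1, ?_⟩
      show (m : Measure X) Z ≤ ν1 Z
      rw [← ENNReal.toReal_le_toReal hmt t1]
      exact le_of_convex_comb habr har hbr.le hr r2
    have k2 : n2 ∈ K1 := by
      refine ⟨m2, ?_⟩
      show (m : Measure X) Z ≤ ν2 Z
      rw [← ENNReal.toReal_le_toReal hmt t2]
      exact le_of_convex_comb (by linarith) hbr har.le (by linarith) r1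
    have hseg : Φ μ ∈ openSegment ℝ (Φ n1) (Φ n2) := by
      refine ⟨a.toReal, b.toReal, har, hbr, habr, ?_⟩
      funext f
      have i1 : Integrable (fun x => f x) ν1 := 
        (f.continuous.integrable_of_hasCompactSupport (HasCompactSupport.of_compactSpace _))
      have i2 : Integrable (fun x => f x) ν2 := 
        (f.continuous.integrable_of_hasCompactSupport (HasCompactSupport.of_compactSpace _))
      show a.toReal * (∫ x, f x ∂ν1) + b.toReal * (∫ x, f x ∂ν2) = ∫ x, f x ∂(μ : Measure X)
      rw [← hμeq, integral_add_measure (i1.smul_measure ha') (i2.smul_measure hb'),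
        integral_smul_measure, integral_smul_measure]
      simp
    have := hext (mem_image_of_mem Φ k1) (mem_image_of_mem Φ k2) hseg
    exact hΦinj n1 μ this
  · intro ν hν hνT
    exact (hmax ⟨ν, hν⟩ ((mem0 _).2 hνT)).trans hμ.2

theorem empirical {X : Type*} [MetricSpace X] [CompactSpace X] [MeasurableSpace X]
    [BorelSpace X] {T : X → X} (hT : Continuous T) (x : ℕ → X) (N : ℕ → ℕ) (hN : ∀ m, m < N m) :
    ∃ ν : Measure X, IsProbabilityMeasure ν ∧ MeasurePreserving T ν ν ∧
      ∀ (V : Set X) (c : ℝ), IsOpen V →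
        (∀ᶠ m in atTop, c * N m ≤ badCount T V (N m) (x m)) → ENNReal.ofReal c ≤ ν Vᶜ := by
  classical
  let μ0 : ℕ → Measure X := fun m =>
    ((N m : ENNReal))⁻¹ • ∑ j ∈ Finset.range (N m), Measure.dirac (T^[j] (x m))
  have hN0 : ∀ m, (N m : ENNReal) ≠ 0 := fun m => by
    have := hN m
    simp; omega
  have hp : ∀ m, IsProbabilityMeasure (μ0 m) := by
    intro m
    constructor
    simp only [μ0, Measure.smul_apply, Measure.finsetSum_apply, measure_univ, smul_eq_mul]
    simp [ENNReal.inv_mul_cancel (hN0 m)]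
  let μ : ℕ → ProbabilityMeasure X := fun m => ⟨μ0 m, hp m⟩
  have hint : ∀ m (f : C(X, ℝ)), ∫ y, f y ∂(μ0 m) =
      (N m : ℝ)⁻¹ * ∑ j ∈ Finset.range (N m), f (T^[j] (x m)) := by
    intro m f
    simp only [μ0]
    rw [integral_smul_measure, integral_finsetSum_measure]
    · simp
    · intro i _
      exact f.continuous.integrable_of_hasCompactSupport (HasCompactSupport.of_compactSpace _)
  let U : Ultrafilter ℕ := hyperfilter ℕ
  have hU : (U : Filter ℕ) ≤ atTop := by
    rw [← Nat.cofinite_eq_atTop]; exact hyperfilter_le_cofinite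
  obtain ⟨ν, -, hν⟩ := (isCompact_univ (X := ProbabilityMeasure X)).ultrafilter_le_nhds (U.map μ)
    (by simp)
  have hν : Tendsto μ U (𝓝 ν) := hν
  refine ⟨ν, inferInstance, ⟨hT.measurable, ?_⟩, ?_⟩
  · have : IsProbabilityMeasure (Measure.map T (ν : Measure X)) :=
      Measure.isProbabilityMeasure_map hT.measurable.aemeasurable
    apply ext_of_forall_integral_eq_of_IsFiniteMeasure
    intro f
    rw [integral_map hT.measurable.aemeasurable
      f.continuous.measurable.aestronglyMeasurable]
    let f1 : C(X, ℝ) := f.toContinuousMap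
    let f2 : C(X, ℝ) := f1.comp ⟨T, hT⟩
    have c1 : Tendsto (fun m => ∫ y, f1 y ∂(μ0 m)) U (𝓝 (∫ y, f1 y ∂(ν : Measure X))) :=
      ((ProbabilityMeasure.continuous_integral_continuousMap f1).tendsto ν).comp hν
    have c2 : Tendsto (fun m => ∫ y, f2 y ∂(μ0 m)) U (𝓝 (∫ y, f2 y ∂(ν : Measure X))) :=
      ((ProbabilityMeasure.continuous_integral_continuousMap f2).tendsto ν).comp hν
    have c3 : Tendsto (fun m => (∫ y, f2 y ∂(μ0 m)) - ∫ y, f1 y ∂(μ0 m)) U (𝓝 0) := by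
      have e : ∀ m, (∫ y, f2 y ∂(μ0 m)) - ∫ y, f1 y ∂(μ0 m) =
          (N m : ℝ)⁻¹ * (f1 (T^[N m] (x m)) - f1 (x m)) := by
        intro m
        rw [hint, hint, ← mul_sub, ← Finset.sum_sub_distrib]
        congr 1
        rw [← Function.iterate_zero_apply T (x m), ← Function.iterate_add_apply,
          ← Finset.sum_range_sub (fun j => f1 (T^[j] (x m)))]
        refine Finset.sum_congr rfl fun j _ => ?_
        simp [f2, Function.iterate_succ_apply']
      simp_rw [e]
      have hNt : Tendsto (fun m => (N m : ℝ)⁻¹) U (𝓝 0) := by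
        refine tendsto_inv_atTop_zero.comp ?_
        refine tendsto_natCast_atTop_atTop.comp ?_
        exact (tendsto_atTop_mono (fun m => (hN m).le) tendsto_id).mono_left hU
      refine hNt.zero_mul_isBoundedUnder_le ?_
      refine isBoundedUnder_of ⟨‖f1‖ + ‖f1‖, fun m => ?_⟩
      refine (norm_sub_le _ _).trans ?_
      gcongr <;> exact ContinuousMap.norm_coe_le_norm _ _
    have := tendsto_nhds_unique c3 (c2.sub c1)
    show ∫ y, f2 y ∂(ν : Measure X) = ∫ y, f1 y ∂(ν : Measure X)
    linarith
  · intro V c hV hc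
    refine le_trans ?_ (ProbabilityMeasure.limsup_measure_closed_le_of_tendsto hν hV.isClosed_compl)
    refine le_limsup_of_frequently_le ?_
    refine Eventually.frequently ?_
    filter_upwards [hU hc] with m hm
    show ENNReal.ofReal c ≤ μ0 m Vᶜ
    have e : μ0 m Vᶜ = (N m : ENNReal)⁻¹ * (badCount T V (N m) (x m) : ENNReal) := by
      simp only [μ0, Measure.smul_apply, Measure.finsetSum_apply, smul_eq_mul, badCount]
      congr 1
      rw [Nat.cast_sum]
      refine Finset.sum_congr rfl fun j _ => ?_
      rw [Measure.dirac_apply' _ hV.measurableSet.compl]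
      by_cases h : T^[j] (x m) ∈ V <;> simp [h]
    rw [e, mul_comm, ← div_eq_mul_inv, ENNReal.le_div_iff_mul_le (Or.inl (hN0 m)) (Or.inl (by simp))]
    rw [← ENNReal.ofReal_natCast, ← ENNReal.ofReal_natCast, ← ENNReal.ofReal_mul' (by positivity)]
    exact ENNReal.ofReal_le_ofReal hm


theorem dynDist_bdd {X : Type*} [MetricSpace X] (T : X → X) (n : ℕ) (x y : X) :
    BddAbove (range fun k => ⨆ _ : k ∈ Finset.range n, dist (T^[k] x) (T^[k] y)) := by
  refine ⟨∑ k ∈ Finset.range n, dist (T^[k] x) (T^[k] y), ?_⟩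
  rintro _ ⟨k, rfl⟩
  refine Real.iSup_le (fun hk => ?_) (Finset.sum_nonneg fun _ _ => dist_nonneg)
  exact Finset.single_le_sum (f := fun k => dist (T^[k] x) (T^[k] y))
    (fun _ _ => dist_nonneg) hk

theorem dist_le_dynDist {X : Type*} [MetricSpace X] (T : X → X) {n k : ℕ} (hk : k < n) (x y : X) :
    dist (T^[k] x) (T^[k] y) ≤ dynDist T n x y := by
  have h := le_ciSup (dynDist_bdd T n x y) k
  have e : (⨆ _ : k ∈ Finset.range n, dist (T^[k] x) (T^[k] y)) = dist (T^[k] x) (T^[k] y) := by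
    have : Nonempty (k ∈ Finset.range n) := ⟨Finset.mem_range.2 hk⟩
    exact ciSup_const
  rw [e] at h
  exact h

theorem dynDist_le_iff {X : Type*} [MetricSpace X] (T : X → X) {n : ℕ} {x y : X} {c : ℝ}
    (hc : 0 ≤ c) : dynDist T n x y ≤ c ↔ ∀ k < n, dist (T^[k] x) (T^[k] y) ≤ c := by
  constructor
  · intro h k hk
    exact (dist_le_dynDist T hk x y).trans h
  · intro h
    exact Real.iSup_le (fun k => Real.iSup_le (fun hk => h k (Finset.mem_range.1 hk)) hc) hc

theorem dynDist_lt_iff {X : Type*} [MetricSpace X] (T : X → X) {n : ℕ} {x y : X} {c : ℝ}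
    (hc : 0 < c) : dynDist T n x y < c ↔ ∀ k < n, dist (T^[k] x) (T^[k] y) < c := by
  constructor
  · intro h k hk
    exact (dist_le_dynDist T hk x y).trans_lt h
  · intro h
    rcases Nat.eq_zero_or_pos n with rfl | hn
    · exact ((dynDist_le_iff T le_rfl).2 (by simp)).trans_lt hc
    · obtain ⟨k, hk, hmax⟩ := Finset.exists_max_image (Finset.range n)
        (fun k => dist (T^[k] x) (T^[k] y)) ⟨0, by simpa using hn⟩
      refine lt_of_le_of_lt ((dynDist_le_iff T dist_nonneg).2 fun j hj => hmax j (by simpa using hj))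
        (h k (by simpa using hk))

theorem isOpen_dynBall {X : Type*} [MetricSpace X] {T : X → X} (hT : Continuous T) (n : ℕ) (x : X)
    {ε : ℝ} (hε : 0 < ε) : IsOpen (dynBall T n x ε) := by
  have e : dynBall T n x ε = ⋂ k ∈ Finset.range n, {y | dist (T^[k] x) (T^[k] y) < ε} := by
    ext y
    simp [dynBall, dynDist_lt_iff T hε]
  rw [e]
  refine isOpen_biInter_finset fun k _ => ?_
  exact isOpen_lt (continuous_const.dist (hT.iterate k)) continuous_const

theorem mem_dynBall {X : Type*} [MetricSpace X] {T : X → X} {n : ℕ} {x y : X}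
    {ε : ℝ} (hε : 0 < ε) : y ∈ dynBall T n x ε ↔ ∀ k < n, dist (T^[k] x) (T^[k] y) < ε :=
  dynDist_lt_iff T hε

theorem sep_card_le {X : Type*} [MetricSpace X] {T : X → X} {n : ℕ} {ρ r : ℝ} (hρ : 0 ≤ ρ)
    (h : MCov T n ρ univ r) (E : Finset X)
    (hE : ∀ x ∈ E, ∀ y ∈ E, x ≠ y → ρ < dynDist T n x y) : (E.card : ℝ) ≤ r := by
  classical
  obtain ⟨F, h1, h2, h3⟩ := h
  refine le_trans ?_ h1
  have h4 : ∀ x : X, ∃ A ∈ F, x ∈ A := fun x => by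
    obtain ⟨A, hA, hx⟩ := h2 (mem_univ x)
    exact ⟨A, hA, hx⟩
  choose g hg hg' using h4
  have : E.card ≤ F.card := by
    refine Finset.card_le_card_of_injOn g (fun x _ => hg x) ?_
    intro x hx y hy hxy
    by_contra hne
    have l := hE x hx y hy hne
    have : dynDist T n x y ≤ ρ := (dynDist_le_iff T hρ).2
      (h3 (g x) (hg x) x (hg' x) y (by have := hg' y; rwa [← hxy] at this))
    linarith
  exact_mod_cast this

theorem sepNum_le {X : Type*} [MetricSpace X] {T : X → X} {n : ℕ} {ρ r : ℝ} (hρ : 0 ≤ ρ)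
    (h : MCov T n ρ univ r) : (sepNum T n univ ρ : ℝ) ≤ r := by
  have hmem : sepNum T n univ ρ ∈ {m | ∃ E : Finset X, ↑E ⊆ (univ : Set X) ∧
      (∀ x ∈ E, ∀ y ∈ E, x ≠ y → ρ < dynDist T n x y) ∧ E.card = m} := by
    refine Nat.sSup_mem ⟨0, ∅, by simp⟩ ⟨⌊r⌋₊, ?_⟩
    rintro m ⟨E, -, hE, rfl⟩
    exact Nat.le_floor (sep_card_le hρ h E hE)
  obtain ⟨E, -, hE, hm⟩ := hmem
  rw [← hm]
  exact sep_card_le hρ h E hE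

theorem exists_spanning {X : Type*} [MetricSpace X] [CompactSpace X] (T : X → X) (n : ℕ) {ρ : ℝ}
    (hρ : 0 < ρ) : ∃ E : Finset X, E.card = sepNum T n univ ρ ∧
      ∀ x, ∃ y ∈ E, ∀ k < n, dist (T^[k] x) (T^[k] y) ≤ ρ := by
  classical
  obtain ⟨M, -, hM⟩ := MCov.exists_one T hρ
  have hc := hM.pow n
  have hbdd : BddAbove {m | ∃ E : Finset X, ↑E ⊆ (univ : Set X) ∧
      (∀ x ∈ E, ∀ y ∈ E, x ≠ y → ρ < dynDist T n x y) ∧ E.card = m} := by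
    refine ⟨⌊M ^ n⌋₊, ?_⟩
    rintro m ⟨E, -, hE, rfl⟩
    exact Nat.le_floor (sep_card_le hρ.le hc E hE)
  have hmem : sepNum T n univ ρ ∈ {m | ∃ E : Finset X, ↑E ⊆ (univ : Set X) ∧
      (∀ x ∈ E, ∀ y ∈ E, x ≠ y → ρ < dynDist T n x y) ∧ E.card = m} :=
    Nat.sSup_mem ⟨0, ∅, by simp⟩ hbdd
  obtain ⟨E, -, hE, hm⟩ := hmem
  refine ⟨E, hm, ?_⟩
  intro x
  by_contra hcon
  push Not at hcon
  have hcon' : ∀ y ∈ E, ρ < dynDist T n x y := by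
    intro y hy
    obtain ⟨k, hk, hlt⟩ := hcon y hy
    exact hlt.trans_le (dist_le_dynDist T hk x y)
  have hsymm : ∀ y, dynDist T n y x = dynDist T n x y := by
    intro y; simp only [dynDist, dist_comm]
  have hxE : x ∉ E := by
    intro hx
    have h0 := hcon' x hx
    have : dynDist T n x x ≤ 0 := (dynDist_le_iff T le_rfl).2 (by simp)
    linarith
  have hle : (insert x E).card ≤ sepNum T n univ ρ := by
    refine le_csSup hbdd ⟨insert x E, subset_univ _, ?_, rfl⟩
    intro a ha b hb hab
    rcases Finset.mem_insert.1 ha with rfl | ha'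
    · rcases Finset.mem_insert.1 hb with rfl | hb'
      · exact absurd rfl hab
      · exact hcon' b hb'
    · rcases Finset.mem_insert.1 hb with rfl | hb'
      · rw [hsymm]; exact hcon' a ha'
      · exact hE a ha' b hb' hab
  rw [Finset.card_insert_of_notMem hxE, hm] at hle
  omega

theorem bk_le_iff {n : ℕ} (hn : 1 ≤ n) (m : ENNReal) (s : ℝ) :
    -(ENNReal.log m) / (n : EReal) ≤ (s : EReal) ↔ ENNReal.ofReal (Real.exp (-(s * n))) ≤ m := by
  have h1 : (0 : EReal) < (n : EReal) := by exact_mod_cast hn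
  have h2 : (n : EReal) ≠ ⊤ := EReal.natCast_ne_top n
  rw [EReal.div_le_iff_le_mul h1 h2, ← ENNReal.log_le_log_iff,
    ENNReal.log_ofReal_of_pos (Real.exp_pos _), Real.log_exp, EReal.neg_le]
  have e : -((n : EReal) * (s : EReal)) = ((-(s * n) : ℝ) : EReal) := by
    push_cast
    rw [mul_comm]
  rw [← e]


theorem essSup_bk_le {X : Type*} [MetricSpace X] [CompactSpace X] [MeasurableSpace X]
    [BorelSpace X] {T : X → X} (μ : Measure X) {ε : ℝ}
    (hε : 0 < ε) : essSup (fun x => brinKatok T μ x ε) μ ≤ sepEnt T univ (ε / 3) := by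
  classical
  rw [← EReal.le_of_forall_lt_iff_le]
  intro s hs
  obtain ⟨s', hs1, hs2⟩ := EReal.lt_iff_exists_real_btwn.1 hs
  have hs2 : s' < s := by exact_mod_cast hs2
  refine essSup_le_of_ae_le _ ?_
  have hev := eventually_lt_of_limsup_lt hs1
  obtain ⟨n0, hn0⟩ := eventually_atTop.1 hev
  let A : ℕ → Set X := fun n => {x | μ (dynBall T n x ε) < ENNReal.ofReal (Real.exp (-(s * n)))}
  have hA : ∀ n, n0 ≤ n → 1 ≤ n → μ (A n) ≤ ENNReal.ofReal (Real.exp (-(s - s'))) ^ n := by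
    intro n hn hn1
    have hlog := hn0 n hn
    have hlog : Real.log (sepNum T n univ (ε / 3)) / n < s' := by exact_mod_cast hlog
    have hnpos : (0 : ℝ) < n := by exact_mod_cast hn1
    rw [div_lt_iff₀ hnpos] at hlog
    have hsep : (sepNum T n univ (ε / 3) : ℝ) ≤ Real.exp (s' * n) := by
      rcases Nat.eq_zero_or_pos (sepNum T n univ (ε / 3)) with h0 | h0
      · rw [h0]; simpa using (Real.exp_pos _).le
      · exact ((Real.log_lt_iff_lt_exp (by exact_mod_cast h0)).1 hlog).le
    obtain ⟨E, hEc, hE⟩ := exists_spanning T n (ρ := ε / 3) (by positivity)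
    let cell : X → Set X := fun c => {x | ∀ k < n, dist (T^[k] x) (T^[k] c) ≤ ε / 3}
    have hcov : A n ⊆ ⋃ c ∈ E, (cell c ∩ A n) := by
      intro x hx
      obtain ⟨c, hc, hxc⟩ := hE x
      exact mem_iUnion₂.2 ⟨c, hc, hxc, hx⟩
    have hcell : ∀ c ∈ E, μ (cell c ∩ A n) ≤ ENNReal.ofReal (Real.exp (-(s * n))) := by
      intro c _
      rcases (cell c ∩ A n).eq_empty_or_nonempty with h | ⟨x, hxc, hxA⟩
      · rw [h]; simp
      · refine le_trans (measure_mono ?_) (le_of_lt hxA)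
        rintro y ⟨hy, -⟩
        rw [mem_dynBall hε]
        intro k hk
        have h1 := hxc k hk
        have h2 := hy k hk
        have h3 := dist_triangle_right (T^[k] x) (T^[k] y) (T^[k] c)
        linarith
    calc μ (A n) ≤ μ (⋃ c ∈ E, (cell c ∩ A n)) := measure_mono hcov
      _ ≤ ∑ c ∈ E, μ (cell c ∩ A n) := measure_biUnion_finset_le _ _
      _ ≤ ∑ c ∈ E, ENNReal.ofReal (Real.exp (-(s * n))) := Finset.sum_le_sum hcell
      _ = ENNReal.ofReal (E.card * Real.exp (-(s * n))) := by
        rw [Finset.sum_const, nsmul_eq_mul, ENNReal.ofReal_mul (by positivity),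
          ENNReal.ofReal_natCast]
      _ ≤ ENNReal.ofReal (Real.exp (s' * n) * Real.exp (-(s * n))) := by
        rw [hEc]; gcongr
      _ = ENNReal.ofReal (Real.exp (-(s - s'))) ^ n := by
        rw [← ENNReal.ofReal_pow (Real.exp_pos _).le, ← Real.exp_add, ← Real.exp_nat_mul]
        congr 2; ring
  have hsum : ∑' i, μ (A (i + (n0 + 1))) ≠ ⊤ := by
    set q := ENNReal.ofReal (Real.exp (-(s - s'))) with hq
    have hq1 : q < 1 := by
      rw [hq, ENNReal.ofReal_lt_one, Real.exp_lt_one_iff]; linarith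
    have h1 : ∑' i, μ (A (i + (n0 + 1))) ≤ ∑' i, q ^ i := by
      refine ENNReal.tsum_le_tsum fun i => ?_
      refine (hA _ (by omega) (by omega)).trans ?_
      exact pow_le_pow_right_of_le_one' hq1.le (by omega)
    refine ne_top_of_le_ne_top ?_ h1
    rw [ENNReal.tsum_geometric]
    simp [tsub_eq_zero_iff_le, hq1]
  filter_upwards [ae_eventually_notMem hsum] with x hx
  refine limsup_le_of_le (by isBoundedDefault) ?_
  obtain ⟨i0, hi0⟩ := eventually_atTop.1 hx
  filter_upwards [eventually_ge_atTop (i0 + (n0 + 1))] with n hn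
  rw [bk_le_iff (by omega)]
  have := hi0 (n - (n0 + 1)) (by omega)
  rw [Nat.sub_add_cancel (by omega)] at this
  exact not_lt.1 this

theorem katok_cover {X : Type*} [MetricSpace X] [CompactSpace X] [MeasurableSpace X]
    [BorelSpace X] {T : X → X} (hT : Continuous T) (μ : Measure X) [IsProbabilityMeasure μ] {ε : ℝ}
    (hε : 0 < ε) {s : ℝ} (hs : ∀ᵐ x ∂μ, brinKatok T μ x ε < s) {δ : ENNReal} (hδ : 0 < δ) (n0 : ℕ)
    {Q : Set X} (hQ : Dense Q) :
    ∃ n ≥ n0, ∃ C : Finset X, ↑C ⊆ Q ∧ (C.card : ℝ) ≤ Real.exp (s * n) ∧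
      μ (⋃ c ∈ C, dynBall T n c (3 * ε))ᶜ ≤ δ := by
  classical
  let D : ℕ → Set X := fun n => {x | ENNReal.ofReal (Real.exp (-(s * n))) ≤ μ (dynBall T n x ε)}
  let D' : ℕ → Set X := fun N => {x | ∀ n ≥ N, x ∈ D n}
  have hmono : Monotone D' := fun a b hab x hx n hn => hx n (hab.trans hn)
  have hfull : μ (⋃ N, D' N) = 1 := by
    have h : ∀ᵐ x ∂μ, x ∈ ⋃ N, D' N := by
      filter_upwards [hs] with x hx
      obtain ⟨N, hN⟩ := eventually_atTop.1 (eventually_lt_of_limsup_lt hx)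
      refine mem_iUnion.2 ⟨max N 1, fun n hn => ?_⟩
      have h1 : 1 ≤ n := (le_max_right N 1).trans hn
      exact (bk_le_iff h1 _ _).1 (hN n ((le_max_left N 1).trans hn)).le
    have h2 := measure_congr (μ := μ) (s := ⋃ N, D' N) (t := univ) (eventuallyEq_univ.2 h)
    rw [h2, measure_univ]
  rw [hmono.measure_iUnion] at hfull
  have hlt : 1 - δ < ⨆ N, μ (D' N) := by
    rw [hfull]
    exact ENNReal.sub_lt_self (by simp) (by simp) hδ.ne'
  obtain ⟨N, hN⟩ := lt_iSup_iff.1 hlt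
  set n := max N n0 with hn
  have hDn : D' N ⊆ D n := fun x hx => hx n (le_max_left _ _)
  refine ⟨n, le_max_right _ _, ?_⟩
  let P : Finset X → Prop := fun E => (∀ x ∈ E, x ∈ D n) ∧
    (E : Set X).PairwiseDisjoint (fun x => dynBall T n x ε)
  have hcard : ∀ E, P E → (E.card : ℝ) ≤ Real.exp (s * n) := by
    intro E hE
    have h1 : (E.card : ENNReal) * ENNReal.ofReal (Real.exp (-(s * n))) ≤ 1 := by
      calc (E.card : ENNReal) * ENNReal.ofReal (Real.exp (-(s * n)))
          = ∑ c ∈ E, ENNReal.ofReal (Real.exp (-(s * n))) := by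
            rw [Finset.sum_const, nsmul_eq_mul]
        _ ≤ ∑ c ∈ E, μ (dynBall T n c ε) := Finset.sum_le_sum fun c hc => hE.1 c hc
        _ = μ (⋃ c ∈ E, dynBall T n c ε) :=
          (measure_biUnion_finset hE.2 fun c _ => (isOpen_dynBall hT n c hε).measurableSet).symm
        _ ≤ 1 := prob_le_one
    rw [← ENNReal.ofReal_natCast, ← ENNReal.ofReal_mul (by positivity), ENNReal.ofReal_le_one,
      Real.exp_neg, ← div_eq_mul_inv, div_le_one (Real.exp_pos _)] at h1
    exact h1
  have hbdd : BddAbove {m | ∃ E, P E ∧ E.card = m} := by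
    refine ⟨⌊Real.exp (s * n)⌋₊, ?_⟩
    rintro m ⟨E, hE, rfl⟩
    exact Nat.le_floor (hcard E hE)
  obtain ⟨E, hE, hEm⟩ := Nat.sSup_mem (s := {m | ∃ E, P E ∧ E.card = m})
    ⟨0, ∅, by simp [P], by simp⟩ hbdd
  have hmax : ∀ y ∈ D n, ∃ x ∈ E, ∀ k < n, dist (T^[k] x) (T^[k] y) < 2 * ε := by
    intro y hy
    by_contra hcon
    push Not at hcon
    have hdisj : ∀ x ∈ E, Disjoint (dynBall T n x ε) (dynBall T n y ε) := by
      intro x hx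
      obtain ⟨k, hk, hkd⟩ := hcon x hx
      rw [Set.disjoint_left]
      intro z hz1 hz2
      have h1 := (mem_dynBall hε).1 hz1 k hk
      have h2 := (mem_dynBall hε).1 hz2 k hk
      have h3 := dist_triangle_right (T^[k] x) (T^[k] y) (T^[k] z)
      linarith
    have hyE : y ∉ E := by
      intro h
      obtain ⟨k, hk, hkd⟩ := hcon y h
      simp at hkd
      linarith
    have hP : P (insert y E) := by
      refine ⟨?_, ?_⟩
      · intro x hx
        rcases Finset.mem_insert.1 hx with rfl | hx
        · exact hy
        · exact hE.1 x hx
      · rw [Finset.coe_insert]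
        refine hE.2.insert fun x hx _ => (hdisj x hx).symm
    have := le_csSup hbdd ⟨insert y E, hP, rfl⟩
    rw [Finset.card_insert_of_notMem hyE, hEm] at this
    omega
  have hq : ∀ x : X, ∃ q ∈ Q, q ∈ dynBall T n x ε := by
    intro x
    obtain ⟨q, h1, h2⟩ := hQ.inter_open_nonempty _ (isOpen_dynBall hT n x hε)
      ⟨x, (mem_dynBall hε).2 fun k _ => by simpa using hε⟩
    exact ⟨q, h2, h1⟩
  choose q hqQ hqb using hq
  refine ⟨E.image q, ?_, ?_, ?_⟩
  · intro z hz
    obtain ⟨x, -, rfl⟩ := Finset.mem_image.1 (Finset.mem_coe.1 hz)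
    exact hqQ x
  · refine le_trans ?_ (hcard E hE)
    exact_mod_cast Finset.card_image_le
  · have hsub : D' N ⊆ ⋃ c ∈ E.image q, dynBall T n c (3 * ε) := by
      intro y hy
      obtain ⟨x, hx, hxy⟩ := hmax y (hDn hy)
      refine mem_iUnion₂.2 ⟨q x, Finset.mem_image_of_mem q hx, ?_⟩
      rw [mem_dynBall (by positivity)]
      intro k hk
      have h1 := (mem_dynBall hε).1 (hqb x) k hk
      have h2 := hxy k hk
      have h3 := dist_triangle_left (T^[k] (q x)) (T^[k] y) (T^[k] x)
      linarith
    have hmeas : MeasurableSet (⋃ c ∈ E.image q, dynBall T n c (3 * ε)) :=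
      Finset.measurableSet_biUnion _
        fun c _ => (isOpen_dynBall hT n c (by positivity)).measurableSet
    rw [prob_compl_eq_one_sub hmeas, tsub_le_iff_left]
    have := hN.le.trans (measure_mono hsub)
    rwa [tsub_le_iff_right] at this


theorem badCount_anti {X : Type*} (T : X → X) {V V' : Set X} (h : V ⊆ V') (N : ℕ) (x : X) :
    badCount T V' N x ≤ badCount T V N x := by
  unfold badCount
  refine Finset.sum_le_sum fun j _ => ?_
  exact Set.indicator_le_indicator_of_subset (compl_subset_compl.2 h) (fun _ => Nat.zero_le _) _

theorem isOpen_badCount_le {X : Type*} [TopologicalSpace X] {T : X → X} (hT : Continuous T)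
    {G : Set X} (hG : IsOpen G) (N b : ℕ) : IsOpen {x | badCount T G N x ≤ b} := by
  rw [isOpen_iff_mem_nhds]
  intro x hx
  have hx : badCount T G N x ≤ b := hx
  have h : ∀ᶠ y in 𝓝 x, ∀ k ∈ Finset.range N, T^[k] x ∈ G → T^[k] y ∈ G := by
    rw [Filter.eventually_all_finset]
    intro k _
    by_cases hk : T^[k] x ∈ G
    · filter_upwards [(hT.iterate k).continuousAt.preimage_mem_nhds (hG.mem_nhds hk)] with y hy _
      exact hy
    · simp [hk]
  filter_upwards [h] with y hy
  refine le_trans ?_ hx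
  unfold badCount
  refine Finset.sum_le_sum fun k hk => ?_
  by_cases hxk : T^[k] x ∈ G
  · simp [hxk, hy k hk hxk]
  · by_cases hyk : T^[k] y ∈ G <;> simp [hxk, hyk]

theorem markov_bad {X : Type*} [MeasurableSpace X] {T : X → X} {μ : Measure X}
    (hμ : MeasurePreserving T μ μ) {G : Set X} (hG : MeasurableSet G) {ℓ : ℕ} (hℓ : 1 ≤ ℓ)
    {δ : ℝ} (hδ : 0 < δ) (hGδ : μ Gᶜ ≤ ENNReal.ofReal (δ * δ)) :
    μ {x | badCount T G ℓ x ≤ ⌊δ * ℓ⌋₊}ᶜ ≤ ENNReal.ofReal δ := by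
  have hind : ∀ k, Measurable fun x => (Gᶜ.indicator (fun _ => (1 : ENNReal))) (T^[k] x) :=
    fun k => (measurable_const.indicator hG.compl).comp (hμ.iterate k).measurable
  let f : X → ENNReal := fun x => ∑ k ∈ Finset.range ℓ, (Gᶜ.indicator (fun _ => (1 : ENNReal))) (T^[k] x)
  have hf : Measurable f := Finset.measurable_fun_sum _ fun k _ => hind k
  have hfb : ∀ x, f x = (badCount T G ℓ x : ENNReal) := by
    intro x
    simp only [f, badCount, Nat.cast_sum]
    refine Finset.sum_congr rfl fun k _ => ?_
    by_cases h : T^[k] x ∈ G <;> simp [h]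
  have hint : ∫⁻ x, f x ∂μ = ℓ * μ Gᶜ := by
    simp only [f]
    rw [lintegral_finsetSum _ fun k _ => hind k]
    have : ∀ k ∈ Finset.range ℓ,
        ∫⁻ x, (Gᶜ.indicator (fun _ => (1 : ENNReal))) (T^[k] x) ∂μ = μ Gᶜ := by
      intro k _
      rw [(hμ.iterate k).lintegral_comp (measurable_const.indicator hG.compl),
        lintegral_indicator_const hG.compl, one_mul]
    rw [Finset.sum_congr rfl this]
    simp
  have hM := mul_meas_ge_le_lintegral (μ := μ) hf (ENNReal.ofReal (δ * ℓ))
  have hsub : {x | badCount T G ℓ x ≤ ⌊δ * ℓ⌋₊}ᶜ ⊆ {x | ENNReal.ofReal (δ * ℓ) ≤ f x} := by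
    intro x hx
    have hx : ⌊δ * ℓ⌋₊ < badCount T G ℓ x := not_le.1 hx
    have hx := (Nat.lt_of_floor_lt hx).le
    show _ ≤ f x
    rw [hfb, ← ENNReal.ofReal_natCast]
    exact ENNReal.ofReal_le_ofReal hx
  refine (measure_mono hsub).trans ?_
  have hℓ' : (0 : ℝ) < ℓ := by exact_mod_cast hℓ
  have h0 : ENNReal.ofReal (δ * ℓ) ≠ 0 := by
    simpa using mul_pos hδ hℓ'
  rw [← ENNReal.mul_le_mul_iff_right h0 ENNReal.ofReal_ne_top]
  refine hM.trans ?_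
  rw [hint, ← ENNReal.ofReal_mul (by positivity)]
  calc (ℓ : ENNReal) * μ Gᶜ ≤ ENNReal.ofReal ℓ * ENNReal.ofReal (δ * δ) := by
        rw [ENNReal.ofReal_natCast]; gcongr
    _ = _ := by rw [← ENNReal.ofReal_mul (by positivity)]; congr 1; ring

theorem mcov_balls {X : Type*} [MetricSpace X] (T : X → X) (n : ℕ) (C : Finset X) {ε : ℝ}
    (hε : 0 < ε) : MCov T n (6 * ε) (⋃ c ∈ C, dynBall T n c (3 * ε)) C.card := by
  classical
  refine ⟨C.image fun c => dynBall T n c (3 * ε), ?_, ?_, ?_⟩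
  · exact_mod_cast Finset.card_image_le
  · intro x hx
    obtain ⟨c, hc, hxc⟩ := mem_iUnion₂.1 hx
    exact ⟨_, Finset.mem_coe.2 (Finset.mem_image_of_mem _ hc), hxc⟩
  · intro A hA x hx y hy k hk
    obtain ⟨c, hc, rfl⟩ := Finset.mem_image.1 hA
    have h1 := (mem_dynBall (by positivity)).1 hx k hk
    have h2 := (mem_dynBall (by positivity)).1 hy k hk
    have h3 := dist_triangle_left (T^[k] x) (T^[k] y) (T^[k] c)
    linarith

theorem exists_large {η A c : ℝ} (hη : 0 < η) (hc : 0 < c) :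
    ∃ n : ℕ, 1 ≤ n ∧ A ≤ Real.exp (η * n) ∧ Real.exp (-(η * n)) ≤ c := by
  have t : Tendsto (fun n : ℕ => η * (n : ℝ)) atTop atTop :=
    tendsto_natCast_atTop_atTop.const_mul_atTop hη
  have t1 := (Real.tendsto_exp_atTop.comp t).eventually_ge_atTop A
  have t2 := (Real.tendsto_exp_neg_atTop_nhds_zero.comp t).eventually_le_const hc
  obtain ⟨n, h1, h2, h3⟩ := ((eventually_ge_atTop 1).and (t1.and t2)).exists
  exact ⟨n, h1, h2, h3⟩

theorem hard_direction {X : Type*} [MetricSpace X] [CompactSpace X] [Nonempty X]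
    [MeasurableSpace X] [BorelSpace X] {T : X → X} (hT : Continuous T) {ε : ℝ} (hε : 0 < ε) {s : ℝ}
    (hs0 : 0 ≤ s) (hs : ∀ μ ∈ ergodicMeasures T, ∀ᵐ x ∂μ, brinKatok T μ x ε < s)
    {η : ℝ} (hη : 0 < η) : sepEnt T univ (6 * ε) ≤ ((s + 6 * η : ℝ) : EReal) := by
  classical
  set ρ := 6 * ε with hρdef
  have hρ : 0 < ρ := by positivity
  obtain ⟨M, hM1, hM⟩ := MCov.exists_one T hρ
  obtain ⟨n0, hn01, -, hn0⟩ := exists_large (A := 0) hη (c := 1 / 2) (by norm_num)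
  have hlogM : 0 < Real.log (2 * M) := Real.log_pos (by linarith)
  set δ : ℝ := η / (2 * Real.log (2 * M)) with hδdef
  have hδ : 0 < δ := by positivity
  have hpow : ∀ N b : ℕ, (b : ℝ) ≤ 2 * δ * N → (2 * M) ^ b ≤ Real.exp (η * N) := by
    intro N b hb
    rw [← Real.exp_log (show (0 : ℝ) < 2 * M by linarith), ← Real.exp_nat_mul]
    apply Real.exp_le_exp.2
    calc (b : ℝ) * Real.log (2 * M) ≤ 2 * δ * N * Real.log (2 * M) := by gcongr
      _ = η * N := by rw [hδdef]; field_simp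
  obtain ⟨Q, hQc, hQ⟩ := TopologicalSpace.exists_countable_dense X
  have : Countable Q := hQc.to_subtype
  let J := {p : ℕ × Finset Q // n0 ≤ p.1 ∧ (p.2.card : ℝ) ≤ Real.exp (s * p.1)}
  have hJ : Countable J := inferInstance
  obtain ⟨enc, henc⟩ := hJ.exists_injective_nat
  let G : J → Set X := fun j => ⋃ c ∈ j.1.2.image (Subtype.val), dynBall T j.1.1 c (3 * ε)
  have hGo : ∀ j, IsOpen (G j) := fun j =>
    isOpen_biUnion fun c _ => isOpen_dynBall hT _ c (by positivity)
  have hGcov : ∀ j, MCov T j.1.1 ρ (G j) (Real.exp (s * j.1.1)) := by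
    intro j
    refine (mcov_balls T j.1.1 (j.1.2.image Subtype.val) hε).mono subset_rfl ?_
    refine le_trans ?_ j.2.2
    exact_mod_cast Finset.card_image_le
  have hA : ∀ j : J, ∃ A : ℝ, 1 ≤ A ∧ ∀ N b : ℕ, MCov T N ρ {x | badCount T (G j) N x ≤ b}
      (A * (2 * M) ^ b * Real.exp ((s + η) * N)) := by
    intro j
    have := tiling hM1 hs0 hη.le hM ({()} : Finset Unit) (fun _ => j.1.1)
      (fun _ _ => hn01.trans j.2.1) (fun _ => G j) (fun _ _ => hGcov j) (by
        rw [Finset.sum_singleton]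
        refine le_trans ?_ hn0
        apply Real.exp_le_exp.2
        have : (n0 : ℝ) ≤ j.1.1 := by exact_mod_cast j.2.1
        have := mul_le_mul_of_nonneg_left this hη.le
        linarith)
    simpa [iUnion_const] using this
  choose A hA1 hA using hA
  have hℓ : ∀ j : J, ∃ n : ℕ, 1 ≤ n ∧ A j ≤ Real.exp (η * n) ∧
      Real.exp (-(η * n)) ≤ 1 / 4 * (1 / 2) ^ enc j := fun j =>
    exists_large hη (by positivity)
  choose ℓ hℓ1 hℓA hℓs using hℓ
  let W : J → Set X := fun j => {x | badCount T (G j) (ℓ j) x ≤ ⌊δ * ℓ j⌋₊}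
  have hWo : ∀ j, IsOpen (W j) := fun j => isOpen_badCount_le hT (hGo j) _ _
  have hWcov : ∀ j, MCov T (ℓ j) ρ (W j) (Real.exp ((s + 3 * η) * ℓ j)) := by
    intro j
    refine (hA j (ℓ j) ⌊δ * ℓ j⌋₊).mono subset_rfl ?_
    have h1 : (2 * M) ^ ⌊δ * ℓ j⌋₊ ≤ Real.exp (η * ℓ j) := by
      apply hpow
      have := Nat.floor_le (show 0 ≤ δ * ℓ j by positivity)
      have h2 : 0 ≤ δ * ℓ j := by positivity
      linarith
    calc A j * (2 * M) ^ ⌊δ * ℓ j⌋₊ * Real.exp ((s + η) * ℓ j)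
        ≤ Real.exp (η * ℓ j) * Real.exp (η * ℓ j) * Real.exp ((s + η) * ℓ j) := by
          gcongr
          exact hℓA j
      _ = _ := by rw [← Real.exp_add, ← Real.exp_add]; congr 1; ring
  have hfin : ∀ m : ℕ, {j : J | enc j < m}.Finite := fun m =>
    (Set.finite_lt_nat m).preimage henc.injOn
  let I : ℕ → Finset J := fun m => (hfin m).toFinset
  have hI : ∀ m j, j ∈ I m ↔ enc j < m := fun m j => by simp [I]
  let V : ℕ → Set X := fun m => ⋃ j ∈ I m, W j
  have hVo : ∀ m, IsOpen (V m) := fun m => isOpen_biUnion fun j _ => hWo j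
  have hVmono : Monotone V := by
    intro a b hab x hx
    obtain ⟨j, hj, hxj⟩ := mem_iUnion₂.1 hx
    exact mem_iUnion₂.2 ⟨j, (hI _ _).2 (((hI _ _).1 hj).trans_le hab), hxj⟩
  have hWV : ∀ j, W j ⊆ ⋃ m, V m := by
    intro j x hx
    exact mem_iUnion.2 ⟨enc j + 1, mem_iUnion₂.2 ⟨j, (hI _ _).2 (Nat.lt_succ_self _), hx⟩⟩
  have hinv : ∃ ν : Measure X, IsProbabilityMeasure ν ∧ MeasurePreserving T ν ν := by
    obtain ⟨ν, h1, h2, -⟩ := empirical hT (fun _ => Classical.arbitrary X) (fun m => m + 1)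
      (fun m => Nat.lt_succ_self m)
    exact ⟨ν, h1, h2⟩
  have hZ : IsClosed (⋃ m, V m)ᶜ := (isOpen_iUnion hVo).isClosed_compl
  obtain ⟨μ, hμ, hμmax⟩ := max_principle hT hZ hinv
  have hμZ : μ (⋃ m, V m)ᶜ ≤ ENNReal.ofReal δ := by
    have := hμ.1
    obtain ⟨n, hn, C, hCQ, hCc, hCμ⟩ := katok_cover hT μ hε (hs μ hμ)
      (δ := ENNReal.ofReal (δ * δ)) (by simpa using mul_pos hδ hδ) n0 hQ
    let C' : Finset Q := C.subtype (· ∈ Q)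
    have hC' : C'.image Subtype.val = C := by
      ext z
      simp only [C', Finset.mem_image, Finset.mem_subtype]
      constructor
      · rintro ⟨a, ha, rfl⟩; exact ha
      · intro hz; exact ⟨⟨z, hCQ hz⟩, hz, rfl⟩
    have hcard : C'.card = C.card := by
      rw [← hC', Finset.card_image_of_injective _ Subtype.val_injective]
    let j : J := ⟨(n, C'), hn, by show (C'.card : ℝ) ≤ _; rw [hcard]; exact hCc⟩
    have hGj : μ (G j)ᶜ ≤ ENNReal.ofReal (δ * δ) := by
      show μ (⋃ c ∈ C'.image Subtype.val, dynBall T n c (3 * ε))ᶜ ≤ _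
      rw [hC']; exact hCμ
    refine le_trans (measure_mono (compl_subset_compl.2 (hWV j))) ?_
    exact markov_bad hμ.2.toMeasurePreserving (hGo j).measurableSet (hℓ1 j) hδ hGj
  have huni : ∃ m : ℕ, ∀ N > m, ∀ x, (badCount T (V m) N x : ℝ) < 2 * δ * N := by
    by_contra hcon
    push Not at hcon
    choose N hN x hx using hcon
    obtain ⟨ν, hν1, hν2, hν⟩ := empirical hT x N hN
    have hVK : ∀ K, ENNReal.ofReal (2 * δ) ≤ ν (V K)ᶜ := by
      intro K
      refine hν (V K) (2 * δ) (hVo K) ?_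
      filter_upwards [eventually_ge_atTop K] with m hm
      refine (hx m).trans ?_
      exact_mod_cast badCount_anti T (hVmono hm) (N m) (x m)
    have h1 : ENNReal.ofReal (2 * δ) ≤ ν (⋃ m, V m)ᶜ := by
      rw [compl_iUnion, Antitone.measure_iInter (fun a b hab => compl_subset_compl.2 (hVmono hab))
        (fun m => (hVo m).measurableSet.compl.nullMeasurableSet) ⟨0, measure_ne_top _ _⟩]
      exact le_iInf hVK
    have h2 := (h1.trans (hμmax ν hν1 hν2)).trans hμZ
    rw [ENNReal.ofReal_le_ofReal_iff hδ.le] at h2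
    linarith
  obtain ⟨m, hm⟩ := huni
  have hsum : ∑ j ∈ I m, Real.exp (-(η * ℓ j)) ≤ 1 / 2 := by
    calc ∑ j ∈ I m, Real.exp (-(η * ℓ j)) ≤ ∑ j ∈ I m, 1 / 4 * (1 / 2 : ℝ) ^ enc j :=
          Finset.sum_le_sum fun j _ => hℓs j
      _ = 1 / 4 * ∑ i ∈ (I m).image enc, (1 / 2 : ℝ) ^ i := by
        rw [← Finset.mul_sum, Finset.sum_image henc.injOn]
      _ ≤ 1 / 4 * 2 := by
        gcongr
        exact (summable_geometric_two.sum_le_tsum _ (fun _ _ => by positivity)).trans_eq tsum_geometric_two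
      _ = 1 / 2 := by norm_num
  obtain ⟨B, hB1, hB⟩ := tiling hM1 (show 0 ≤ s + 3 * η by positivity) hη.le hM (I m) ℓ
    (fun j _ => hℓ1 j) W (fun j _ => hWcov j) hsum
  have hfinal : ∀ N > m, (sepNum T N univ ρ : ℝ) ≤ B * Real.exp ((s + 5 * η) * N) := by
    intro N hN
    have hfl : (⌊2 * δ * N⌋₊ : ℝ) ≤ 2 * δ * N := Nat.floor_le (by positivity)
    refine sepNum_le hρ.le ((hB N ⌊2 * δ * N⌋₊).mono ?_ ?_)
    · intro x _
      exact Nat.le_floor (hm N hN x).le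
    · calc B * (2 * M) ^ ⌊2 * δ * N⌋₊ * Real.exp ((s + 3 * η + η) * N)
          ≤ B * Real.exp (η * N) * Real.exp ((s + 3 * η + η) * N) := by
            gcongr
            exact hpow N _ hfl
        _ = _ := by rw [mul_assoc, ← Real.exp_add]; congr 2; ring
  have hBt : Tendsto (fun N : ℕ => Real.log B / N) atTop (𝓝 0) :=
    tendsto_const_div_atTop_nhds_zero_nat _
  refine limsup_le_of_le (by isBoundedDefault) ?_
  filter_upwards [eventually_gt_atTop m, hBt.eventually_le_const hη] with N hN hBN
  rw [EReal.coe_le_coe_iff]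
  have hNpos : (0 : ℝ) < N := by exact_mod_cast (Nat.zero_le m).trans_lt hN
  have hlog : Real.log (sepNum T N univ ρ) ≤ Real.log B + (s + 5 * η) * N := by
    rcases Nat.eq_zero_or_pos (sepNum T N univ ρ) with h0 | h0
    · rw [h0]
      have := Real.log_nonneg hB1
      simp only [Nat.cast_zero, Real.log_zero]
      positivity
    · have := Real.log_le_log (by exact_mod_cast h0) (hfinal N hN)
      rwa [Real.log_mul (by positivity) (Real.exp_pos _).ne', Real.log_exp] at this
  rw [div_le_iff₀ hNpos] at hBN ⊢
  linarith


theorem limsup_compare (f g : ℝ → EReal) {c : ℝ} (hc : 0 < c)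
    (hf : ∀ ε : ℝ, 0 < ε → f ε ≤ g (c * ε)) (hg : ∀ ε : ℝ, 0 < ε → 0 ≤ g ε) :
    limsup (fun ε : ℝ => f ε / ((Real.log (1 / ε) : ℝ) : EReal)) (𝓝[>] (0:ℝ)) ≤
    limsup (fun ε : ℝ => g ε / ((Real.log (1 / ε) : ℝ) : EReal)) (𝓝[>] (0:ℝ)) := by
  have hpos : ∀ᶠ ε : ℝ in 𝓝[>] (0:ℝ), 0 < ε := self_mem_nhdsWithin
  have hlog : Tendsto (fun ε : ℝ => Real.log (1 / ε)) (𝓝[>] (0:ℝ)) atTop := by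
    have : Tendsto (fun ε : ℝ => 1 / ε) (𝓝[>] (0:ℝ)) atTop := by
      simpa using tendsto_inv_nhdsGT_zero (𝕜 := ℝ)
    exact Real.tendsto_log_atTop.comp this
  have hmul : Tendsto (fun ε : ℝ => c * ε) (𝓝[>] (0:ℝ)) (𝓝[>] (0:ℝ)) := by
    apply tendsto_nhdsWithin_of_tendsto_nhds_of_eventually_within
    · have : Tendsto (fun ε : ℝ => c * ε) (𝓝 (0:ℝ)) (𝓝 (c * 0)) :=
        (continuous_const.mul continuous_id).tendsto 0
      rw [mul_zero] at this
      exact this.mono_left nhdsWithin_le_nhds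
    · filter_upwards [hpos] with ε h
      exact mul_pos hc h
  have hL0 : 0 ≤ limsup (fun ε : ℝ => g ε / ((Real.log (1 / ε) : ℝ) : EReal)) (𝓝[>] (0:ℝ)) := by
    refine le_limsup_of_frequently_le ?_
    · apply Eventually.frequently
      filter_upwards [hpos, hlog.eventually_gt_atTop 0] with ε h1 h2
      exact EReal.div_nonneg (hg ε h1) (by exact_mod_cast h2.le)
  refine EReal.le_of_forall_lt_iff_le.1 fun z hz => ?_
  obtain ⟨a, ha1, ha2⟩ := EReal.lt_iff_exists_real_btwn.1 hz
  have ha0 : 0 ≤ a := by exact_mod_cast (hL0.trans ha1.le)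
  have haz : a < z := by exact_mod_cast ha2
  have hev := eventually_lt_of_limsup_lt ha1
  apply limsup_le_of_le
  · isBoundedDefault
  filter_upwards [hpos, hlog.eventually_gt_atTop 0, hmul.eventually hev,
    (hlog.comp hmul).eventually_gt_atTop 0,
    hlog.eventually_ge_atTop ((-(a * Real.log c)) / (z - a))] with ε h1 h2 h3 h4 h5
  simp only [Function.comp] at h4
  rw [EReal.div_le_iff_le_mul (by exact_mod_cast h2) (EReal.coe_ne_top _)]
  have h6 := (EReal.div_le_iff_le_mul (by exact_mod_cast h4) (EReal.coe_ne_top _)).1 h3.le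
  refine (hf ε h1).trans (h6.trans ?_)
  rw [div_le_iff₀ (by linarith)] at h5
  have h7 : Real.log (1 / (c * ε)) = Real.log (1 / ε) - Real.log c := by
    rw [one_div, one_div, Real.log_inv, Real.log_inv, Real.log_mul hc.ne' h1.ne']; ring
  rw [h7]
  have : (Real.log (1 / ε) - Real.log c) * a ≤ Real.log (1 / ε) * z := by nlinarith
  exact_mod_cast this

theorem sepEnt_nonneg {X : Type*} [MetricSpace X] (T : X → X) (K : Set X) (ε : ℝ) :
    0 ≤ sepEnt T K ε := by
  unfold sepEnt
  refine le_limsup_of_frequently_le ?_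
  · apply Eventually.frequently
    filter_upwards with n
    have : (0:ℝ) ≤ Real.log (sepNum T n K ε) / n :=
      div_nonneg (Real.log_natCast_nonneg _) (Nat.cast_nonneg _)
    exact_mod_cast this

theorem bk_nonneg {X : Type*} [MetricSpace X] [MeasurableSpace X] (T : X → X) (μ : Measure X)
    [IsProbabilityMeasure μ] (x : X) (ε : ℝ) : 0 ≤ brinKatok T μ x ε := by
  unfold brinKatok
  refine le_limsup_of_frequently_le ?_
  · apply Eventually.frequently
    filter_upwards with n
    apply EReal.div_nonneg
    · have h : ENNReal.log (μ (dynBall T n x ε)) ≤ 0 := by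
        rw [← ENNReal.log_one]
        exact ENNReal.log_monotone prob_le_one
      exact EReal.neg_nonneg.2 h
    · exact_mod_cast Nat.zero_le n

theorem iSup_bk_nonneg {X : Type*} [MetricSpace X] [CompactSpace X] [Nonempty X]
    [MeasurableSpace X] [BorelSpace X] {T : X → X} (hT : Continuous T) (ε : ℝ) :
    0 ≤ ⨆ μ ∈ ergodicMeasures T, essSup (fun x => brinKatok T μ x ε) μ := by
  obtain ⟨ν, h1, h2, -⟩ := empirical hT (fun _ => Classical.arbitrary X) (fun m => m + 1)
    (fun m => Nat.lt_succ_self m)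
  obtain ⟨μ, hμ, -⟩ := max_principle hT (isClosed_empty) ⟨ν, h1, h2⟩
  refine le_trans ?_ (le_iSup₂ (f := fun μ (_ : μ ∈ ergodicMeasures T) =>
    essSup (fun x => brinKatok T μ x ε) μ) μ hμ)
  have := hμ.1
  have h : ∀ᵐ x ∂μ, (0 : EReal) ≤ essSup (fun x => brinKatok T μ x ε) μ := by
    filter_upwards [ae_le_essSup (μ := μ) (f := fun x => brinKatok T μ x ε)] with x hx
    exact (bk_nonneg T μ x ε).trans hx
  obtain ⟨x, hx⟩ := h.exists
  exact hx

theorem sepEnt_le_iSup_bk {X : Type*} [MetricSpace X] [CompactSpace X] [Nonempty X]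
    [MeasurableSpace X] [BorelSpace X] {T : X → X} (hT : Continuous T) {ε : ℝ} (hε : 0 < ε) :
    sepEnt T univ (6 * ε) ≤
      ⨆ μ ∈ ergodicMeasures T, essSup (fun x => brinKatok T μ x ε) μ := by
  refine EReal.le_of_forall_lt_iff_le.1 fun z hz => ?_
  obtain ⟨s, hs1, hs2⟩ := EReal.lt_iff_exists_real_btwn.1 hz
  have hs0 : 0 ≤ s := by exact_mod_cast ((iSup_bk_nonneg hT ε).trans hs1.le)
  have hsz : s < z := by exact_mod_cast hs2
  have := hard_direction (η := (z - s) / 6) hT hε hs0 (fun μ hμ => by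
    have h : essSup (fun x => brinKatok T μ x ε) μ < s :=
      lt_of_le_of_lt (le_iSup₂ (f := fun μ (_ : μ ∈ ergodicMeasures T) =>
        essSup (fun x => brinKatok T μ x ε) μ) μ hμ) hs1
    filter_upwards [ae_le_essSup (μ := μ) (f := fun x => brinKatok T μ x ε)] with x hx
    exact lt_of_le_of_lt hx h) (by linarith)
  convert this using 2
  ring

theorem upper_mdim_eq_aux {X : Type*} [MetricSpace X] [CompactSpace X] [Nonempty X]
    [MeasurableSpace X] [BorelSpace X] (T : X → X) (hT : IsHomeomorph T) :
    mdimUpper T = limsup (fun ε : ℝ =>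
      (⨆ μ ∈ ergodicMeasures T, essSup (fun x => brinKatok T μ x ε) μ)
        / ((Real.log (1 / ε) : ℝ) : EReal)) (𝓝[>] (0:ℝ)) := by
  unfold mdimUpper
  apply le_antisymm
  · refine limsup_compare (sepEnt T univ)
      (fun ε => ⨆ μ ∈ ergodicMeasures T, essSup (fun x => brinKatok T μ x ε) μ)
      (c := 1 / 6) (by norm_num) (fun ε hε => ?_) (fun ε _ => iSup_bk_nonneg hT.continuous ε)
    have := sepEnt_le_iSup_bk hT.continuous (ε := 1 / 6 * ε) (by positivity)
    rwa [show 6 * (1 / 6 * ε) = ε by ring] at this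
  · refine limsup_compare
      (fun ε => ⨆ μ ∈ ergodicMeasures T, essSup (fun x => brinKatok T μ x ε) μ) (sepEnt T univ)
      (c := 1 / 3) (by norm_num) (fun ε hε => ?_) (fun ε _ => sepEnt_nonneg T univ ε)
    refine iSup₂_le fun μ hμ => ?_
    have := essSup_bk_le (T := T) μ hε
    rwa [show ε / 3 = 1 / 3 * ε by ring] at this


section Theorems

variable [MetricSpace X] [CompactSpace X] [Nonempty X] [MeasurableSpace X] [BorelSpace X]

/-- Variational principle for the upper metric mean dimension in terms of Brin-Katok
local entropy, where `h_μ^{BK}(ε)` is the μ-essential supremum of `x ↦ h_μ^{BK}(x, ε)`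
(Theorem 5.2, first part). -/
theorem upper_mdim_eq_limsup_brinKatok (T : X → X) (hT : IsHomeomorph T) :
    mdimUpper T = limsup (fun ε : ℝ =>
      (⨆ μ ∈ ergodicMeasures T, essSup (fun x => brinKatok T μ x ε) μ)
        / ((Real.log (1 / ε) : ℝ) : EReal)) (𝓝[>] (0:ℝ)) := by
  exact upper_mdim_eq_aux T hT

end Theorems
end

section
/- Let (X, d, T) be a topological dynamical system. Then the lower metric mean dimension satisfies mdim̲_M(X,d,T) = liminf_{ε→0} (1/log(1/ε)) · sup_{μ ∈ E_T(X)} h_μ^{BK}(ε), where h_μ^{BK}(ε) denotes the μ-essential supremum of x ↦ h_μ^{BK}(x,ε) (this function is μ-a.e. constant for ergodic μ). -/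
open Filter MeasureTheory Set Topology

variable {X : Type*}

set_option linter.unusedSectionVars false

namespace BKVP

/-- `A` is covered by at most `m` sets of `d_N`-diameter at most `r`. -/
def Cov [MetricSpace X] (T : X → X) (r : ℝ) (N : ℕ) (A : Set X) (m : ℝ) : Prop :=
  ∃ F : Finset (Set X), (∀ s ∈ F, ∀ x ∈ s, ∀ y ∈ s, ∀ k < N, dist (T^[k] x) (T^[k] y) ≤ r) ∧
    A ⊆ ⋃₀ (F : Set (Set X)) ∧ (F.card : ℝ) ≤ m

/-- the set of points with at most `b` visits to the complement of `G` before time `N` -/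
def goodSet (T : X → X) (G : Set X) (N b : ℕ) : Set X :=
  {x | Set.ncard {k | k < N ∧ T^[k] x ∉ G} ≤ b}

lemma bad_finite (T : X → X) (G : Set X) (N : ℕ) (x : X) :
    Set.Finite {k | k < N ∧ T^[k] x ∉ G} :=
  (Set.finite_lt_nat N).subset (fun _ h => h.1)

section cov
variable [MetricSpace X] {T : X → X} {r : ℝ}

lemma Cov.mono {N N' : ℕ} {A B : Set X} {m m' : ℝ} (h : Cov T r N B m) (hN : N' ≤ N)
    (hA : A ⊆ B) (hm : m ≤ m') : Cov T r N' A m' := by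
  obtain ⟨F, h1, h2, h3⟩ := h
  exact ⟨F, fun s hs x hx y hy k hk => h1 s hs x hx y hy k (hk.trans_le hN), hA.trans h2,
    h3.trans hm⟩

lemma Cov.zero (A : Set X) : Cov T r 0 A 1 :=
  ⟨{univ}, by simp, by simp, by simp⟩

lemma Cov.empty {N : ℕ} : Cov T r N (∅ : Set X) 0 :=
  ⟨∅, by simp, by simp, by simp⟩

lemma Cov.union {N : ℕ} {A B : Set X} {m m' : ℝ} (h : Cov T r N A m) (h' : Cov T r N B m') :
    Cov T r N (A ∪ B) (m + m') := by
  classical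
  obtain ⟨F, h1, h2, h3⟩ := h
  obtain ⟨F', h1', h2', h3'⟩ := h'
  refine ⟨F ∪ F', ?_, ?_, ?_⟩
  · intro s hs
    rcases Finset.mem_union.1 hs with hs | hs
    · exact h1 s hs
    · exact h1' s hs
  · rw [Finset.coe_union, Set.sUnion_union]
    exact Set.union_subset_union h2 h2'
  · have := Finset.card_union_le F F'
    have : ((F ∪ F').card : ℝ) ≤ F.card + F'.card := by exact_mod_cast this
    linarith

lemma Cov.biUnion {ι : Type*} {N : ℕ} (J : Finset ι) (A : ι → Set X) (m : ι → ℝ)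
    (h : ∀ j ∈ J, Cov T r N (A j) (m j)) :
    Cov T r N (⋃ j ∈ J, A j) (∑ j ∈ J, m j) := by
  classical
  induction J using Finset.induction_on with
  | empty => simpa using Cov.empty
  | insert a J ha ih =>
    rw [Finset.sum_insert ha, Finset.set_biUnion_insert]
    exact (h a (Finset.mem_insert_self _ _)).union
      (ih fun j hj => h j (Finset.mem_insert_of_mem hj))

lemma Cov.concat {n N : ℕ} {A B : Set X} {m m' : ℝ} (h : Cov T r n A m) (h' : Cov T r N B m') :
    Cov T r (n + N) (A ∩ T^[n] ⁻¹' B) (m * m') := by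
  classical
  obtain ⟨F, h1, h2, h3⟩ := h
  obtain ⟨F', h1', h2', h3'⟩ := h'
  refine ⟨Finset.image₂ (fun s s' => s ∩ T^[n] ⁻¹' s') F F', ?_, ?_, ?_⟩
  · intro s hs
    obtain ⟨a, ha, b, hb, rfl⟩ := Finset.mem_image₂.1 hs
    intro x hx y hy k hk
    rcases lt_or_ge k n with hkn | hkn
    · exact h1 a ha x hx.1 y hy.1 k hkn
    · have := h1' b hb _ hx.2 _ hy.2 (k - n) (by omega)
      rwa [← Function.iterate_add_apply, ← Function.iterate_add_apply,
        Nat.sub_add_cancel hkn] at this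
  · rintro x ⟨hxA, hxB⟩
    obtain ⟨a, ha, hxa⟩ := h2 hxA
    obtain ⟨b, hb, hxb⟩ := h2' hxB
    exact ⟨_, Finset.mem_coe.2 (Finset.mem_image₂_of_mem ha hb), hxa, hxb⟩
  · have := Finset.card_image₂_le (fun (s s' : Set X) => s ∩ T^[n] ⁻¹' s') F F'
    calc _ ≤ ((F.card * F'.card : ℕ) : ℝ) := by exact_mod_cast this
      _ = F.card * F'.card := by push_cast; ring
      _ ≤ m * m' := by
        apply mul_le_mul h3 h3' (by positivity) (le_trans (by positivity) h3)

lemma goodSet_shift (T : X → X) (G : Set X) (N n b : ℕ) {x : X} (hx : x ∈ goodSet T G N b) :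
    T^[n] x ∈ goodSet T G (N - n) b := by
  have hx' : Set.ncard {k | k < N ∧ T^[k] x ∉ G} ≤ b := hx
  refine le_trans ?_ hx'
  have : (fun k => k + n) '' {k | k < N - n ∧ T^[k] (T^[n] x) ∉ G} ⊆
      {k | k < N ∧ T^[k] x ∉ G} := by
    rintro _ ⟨k, ⟨hk, hk'⟩, rfl⟩
    refine ⟨by dsimp only; omega, ?_⟩
    rwa [← Function.iterate_add_apply] at hk'
  rw [← Set.ncard_image_of_injective _ (add_left_injective n)]
  exact Set.ncard_le_ncard this (bad_finite T G N x)

lemma goodSet_shift_bad (T : X → X) (G : Set X) (N b : ℕ) {x : X}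
    (hx : x ∈ goodSet T G (N + 1) b) (hxG : x ∉ G) :
    1 ≤ b ∧ T^[1] x ∈ goodSet T G N (b - 1) := by
  have hx' : Set.ncard {k | k < N + 1 ∧ T^[k] x ∉ G} ≤ b := hx
  have : insert 0 ((fun k => k + 1) '' {k | k < N ∧ T^[k] (T^[1] x) ∉ G}) ⊆
      {k | k < N + 1 ∧ T^[k] x ∉ G} := by
    rintro _ (rfl | ⟨k, ⟨hk, hk'⟩, rfl⟩)
    · exact ⟨by omega, by simpa using hxG⟩
    refine ⟨by dsimp only; omega, ?_⟩
    rwa [← Function.iterate_add_apply] at hk'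
  have h2 := Set.ncard_le_ncard this (bad_finite T G (N+1) x)
  rw [Set.ncard_insert_of_notMem (by simp) ((bad_finite T G N _).image _),
    Set.ncard_image_of_injective _ (add_left_injective 1)] at h2
  refine ⟨by omega, ?_⟩
  show Set.ncard _ ≤ b - 1
  omega

/-- Greedy covering lemma. -/
lemma greedy {ι : Type*} (J : Finset ι) (L : ι → ℕ) (V : ι → Set X) (m : ι → ℝ) (t M K : ℝ)
    (ht : 0 ≤ t) (hM : 1 ≤ M) (hK : 1 ≤ K)
    (hL : ∀ j ∈ J, 1 ≤ L j) (hm : ∀ j ∈ J, 0 ≤ m j)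
    (hV : ∀ j ∈ J, Cov T r (L j) (V j) (m j))
    (hsum : ∑ j ∈ J, m j * Real.exp (-(L j * t)) ≤ 1 / 2)
    (hKj : ∀ j ∈ J, Real.exp (L j * t) ≤ K)
    (hX : Cov T r 1 univ M) :
    ∀ N b : ℕ, Cov T r N (goodSet T (⋃ j ∈ J, V j) N b)
      (K * Real.exp (N * t) * (2 * M) ^ b) := by
  intro N
  induction N using Nat.strong_induction_on with
  | _ N ih =>
  intro b
  have hpow : ∀ b : ℕ, 1 ≤ (2 * M) ^ b := fun b => one_le_pow₀ (by linarith)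
  set G := ⋃ j ∈ J, V j with hG
  rcases N with _ | N
  · refine (Cov.zero _).mono le_rfl (Set.subset_univ _) ?_
    simp only [Nat.cast_zero, zero_mul, Real.exp_zero, mul_one]
    nlinarith [hpow b]
  have hB0 : 0 ≤ K * Real.exp ((N + 1 : ℕ) * t) * (2 * M) ^ b := by
    have := hpow b; positivity
  have key : ∀ j ∈ J, Cov T r (N + 1) (V j ∩ T^[L j] ⁻¹' goodSet T G (N + 1 - L j) b)
      (m j * Real.exp (-(L j * t)) * (K * Real.exp ((N + 1 : ℕ) * t) * (2 * M) ^ b)) := by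
    intro j hj
    have h1 := hL j hj
    rcases le_or_gt (L j) (N + 1) with hle | hgt
    · refine ((hV j hj).concat (ih (N + 1 - L j) (by omega) b)).mono (by omega) le_rfl ?_
      apply le_of_eq
      rw [Nat.cast_sub hle]
      have : Real.exp (((N + 1 : ℕ) - (L j : ℝ)) * t) =
        Real.exp (-(L j * t)) * Real.exp ((N + 1 : ℕ) * t) := by
        rw [← Real.exp_add]; congr 1; ring
      rw [this]; ring
    · refine (hV j hj).mono hgt.le Set.inter_subset_left ?_
      have h2 : 1 ≤ Real.exp (-(L j * t)) * (K * Real.exp ((N + 1 : ℕ) * t) * (2 * M) ^ b) := by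
        have h3 : 1 ≤ Real.exp (-(L j * t)) * K := by
          rw [Real.exp_neg, ← div_eq_inv_mul, one_le_div (Real.exp_pos _)]
          exact hKj j hj
        have h4 : 1 ≤ Real.exp ((N + 1 : ℕ) * t) := Real.one_le_exp (by positivity)
        have h5 := hpow b
        calc (1:ℝ) = 1 * 1 * 1 := by ring
          _ ≤ (Real.exp (-(L j * t)) * K) * Real.exp ((N + 1 : ℕ) * t) * (2 * M) ^ b := by
            gcongr
          _ = _ := by ring
      nlinarith [hm j hj]
  have hgood := Cov.biUnion J _ _ key
  rw [← Finset.sum_mul] at hgood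
  have hbad : Cov T r (N + 1) {x | 1 ≤ b ∧ T^[1] x ∈ goodSet T G N (b - 1)}
      (1 / 2 * (K * Real.exp ((N + 1 : ℕ) * t) * (2 * M) ^ b)) := by
    rcases Nat.eq_zero_or_pos b with hb | hb
    · refine Cov.empty.mono le_rfl ?_ (by positivity)
      rintro x ⟨hx, _⟩
      omega
    · refine (hX.concat (ih N (by omega) (b - 1))).mono (by omega) (fun x hx => ⟨trivial, hx.2⟩) ?_
      obtain ⟨c, rfl⟩ : ∃ c, b = c + 1 := ⟨b - 1, by omega⟩
      simp only [Nat.add_sub_cancel]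
      have : Real.exp (N * t) ≤ Real.exp ((N + 1 : ℕ) * t) := by
        apply Real.exp_le_exp.2; push_cast; nlinarith
      calc M * (K * Real.exp (N * t) * (2 * M) ^ c)
          ≤ M * (K * Real.exp ((N + 1 : ℕ) * t) * (2 * M) ^ c) := by
            have := hpow c; gcongr
        _ = _ := by rw [pow_succ]; ring
  refine (hgood.union hbad).mono le_rfl ?_ ?_
  · intro x hx
    by_cases hxG : x ∈ G
    · left
      obtain ⟨j, hj, hxj⟩ := Set.mem_iUnion₂.1 hxG
      exact Set.mem_iUnion₂.2 ⟨j, hj, hxj, goodSet_shift T G (N + 1) (L j) b hx⟩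
    · right
      exact goodSet_shift_bad T G N b hx hxG
  · nlinarith

lemma sep_card_le {N : ℕ} {m : ℝ} (h : Cov T r N univ m) (E : Finset X)
    (hE : ∀ x ∈ E, ∀ y ∈ E, x ≠ y → ∃ k < N, r < dist (T^[k] x) (T^[k] y)) :
    (E.card : ℝ) ≤ m := by
  obtain ⟨F, h1, h2, h3⟩ := h
  have : ∀ x : X, ∃ s ∈ F, x ∈ s := fun x => h2 (mem_univ x)
  choose f hf hxf using this
  refine le_trans ?_ h3
  norm_cast
  by_contra! hlt
  obtain ⟨x, hx, y, hy, hne, heq⟩ :=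
    Finset.exists_ne_map_eq_of_card_lt_of_maps_to hlt (f := f) (fun x _ => hf x)
  obtain ⟨k, hk, hk'⟩ := hE x hx y hy hne
  have := h1 (f x) (hf x) x (hxf x) y (heq ▸ hxf y) k hk
  linarith

lemma dynDist_bdd (T : X → X) (n : ℕ) (x y : X) :
    BddAbove (range fun k => ⨆ (_ : k ∈ Finset.range n), dist (T^[k] x) (T^[k] y)) := by
  refine ⟨∑ k ∈ Finset.range n, dist (T^[k] x) (T^[k] y), ?_⟩
  rintro _ ⟨k, rfl⟩
  dsimp only
  by_cases hk : k ∈ Finset.range n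
  · rw [ciSup_pos hk]
    exact Finset.single_le_sum (f := fun k => dist (T^[k] x) (T^[k] y))
      (fun _ _ => dist_nonneg) hk
  · simp only [hk, Real.iSup_of_isEmpty]
    exact Finset.sum_nonneg fun _ _ => dist_nonneg

lemma dist_le_dynDist (T : X → X) {n k : ℕ} (hk : k < n) (x y : X) :
    dist (T^[k] x) (T^[k] y) ≤ dynDist T n x y := by
  refine le_trans ?_ (le_ciSup (dynDist_bdd T n x y) k)
  rw [ciSup_pos (Finset.mem_range.2 hk)]

lemma dynDist_le (T : X → X) {n : ℕ} {x y : X} {a : ℝ} (ha : 0 ≤ a)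
    (h : ∀ k < n, dist (T^[k] x) (T^[k] y) ≤ a) : dynDist T n x y ≤ a := by
  refine Real.iSup_le (fun k => ?_) ha
  exact Real.iSup_le (fun hk => h k (Finset.mem_range.1 hk)) ha

lemma lt_dynDist_iff (T : X → X) {n : ℕ} {x y : X} {a : ℝ} (ha : 0 ≤ a) :
    a < dynDist T n x y ↔ ∃ k < n, a < dist (T^[k] x) (T^[k] y) := by
  constructor
  · intro h
    by_contra! hc
    exact absurd (dynDist_le T ha hc) (not_le.2 h)
  · rintro ⟨k, hk, h⟩
    exact h.trans_le (dist_le_dynDist T hk x y)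

lemma dynDist_lt_iff (T : X → X) {n : ℕ} {x y : X} {a : ℝ} (ha : 0 < a) :
    dynDist T n x y < a ↔ ∀ k < n, dist (T^[k] x) (T^[k] y) < a := by
  constructor
  · intro h k hk
    exact (dist_le_dynDist T hk x y).trans_lt h
  · intro h
    rcases Nat.eq_zero_or_pos n with rfl | hn
    · exact (dynDist_le T le_rfl (by simp)).trans_lt ha
    · obtain ⟨k, hk, hk'⟩ := Finset.exists_max_image (Finset.range n)
        (fun k => dist (T^[k] x) (T^[k] y)) ⟨0, Finset.mem_range.2 hn⟩
      exact (dynDist_le T dist_nonneg (fun j hj => hk' j (Finset.mem_range.2 hj))).trans_lt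
        (h k (Finset.mem_range.1 hk))

lemma mem_dynBall_iff (T : X → X) {n : ℕ} {x y : X} {a : ℝ} (ha : 0 < a) :
    y ∈ dynBall T n x a ↔ ∀ k < n, dist (T^[k] x) (T^[k] y) < a := dynDist_lt_iff T ha

lemma isOpen_dynBall (hT : Continuous T) (n : ℕ) (x : X) {a : ℝ} (ha : 0 < a) :
    IsOpen (dynBall T n x a) := by
  have : dynBall T n x a = ⋂ k ∈ Finset.range n, {y | dist (T^[k] x) (T^[k] y) < a} := by
    ext y
    simp [mem_dynBall_iff T ha]
  rw [this]
  refine isOpen_biInter_finset fun k _ => ?_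
  exact isOpen_lt (continuous_const.dist (hT.iterate k)) continuous_const

lemma exists_span [CompactSpace X] (hT : Continuous T) (n : ℕ) {a : ℝ} (ha : 0 < a) :
    ∃ D : Finset X, ∀ x, ∃ y ∈ D, x ∈ dynBall T n y a := by
  obtain ⟨D, hD⟩ := isCompact_univ.elim_finite_subcover (fun y => dynBall T n y a)
    (fun y => isOpen_dynBall hT n y ha)
    (fun x _ => mem_iUnion.2 ⟨x, by simp [mem_dynBall_iff T ha, ha]⟩)
  exact ⟨D, fun x => by simpa using hD (mem_univ x)⟩

lemma cov_balls (n : ℕ) (C : Finset X) {a : ℝ} (ha : 0 < a) :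
    Cov T (2 * a) n (⋃ y ∈ C, dynBall T n y a) C.card := by
  classical
  refine ⟨C.image fun y => dynBall T n y a, ?_, ?_, ?_⟩
  · intro s hs x hx y hy k hk
    obtain ⟨c, hc, rfl⟩ := Finset.mem_image.1 hs
    have h1 := (mem_dynBall_iff T ha).1 hx k hk
    have h2 := (mem_dynBall_iff T ha).1 hy k hk
    have := dist_triangle_left (T^[k] x) (T^[k] y) (T^[k] c)
    linarith
  · intro x hx
    obtain ⟨y, hy, hxy⟩ := mem_iUnion₂.1 hx
    exact ⟨_, Finset.mem_coe.2 (Finset.mem_image_of_mem _ hy), hxy⟩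
  · exact_mod_cast Finset.card_image_le

lemma exists_cov [CompactSpace X] (hT : Continuous T) (n : ℕ) (hr : 0 < r) :
    ∃ m : ℝ, 1 ≤ m ∧ Cov T r n univ m := by
  obtain ⟨D, hD⟩ := exists_span hT n (half_pos hr)
  refine ⟨max 1 D.card, le_max_left _ _, ?_⟩
  have := cov_balls (T := T) n D (half_pos hr)
  rw [mul_div_cancel₀ r two_ne_zero] at this
  exact this.mono le_rfl (fun x _ => by simpa using hD x) (le_max_right _ _)

end cov

section erg
variable [MetricSpace X] [CompactSpace X] [MeasurableSpace X] [BorelSpace X] {T : X → X}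

lemma cond_invariant (μ : Measure X) [IsProbabilityMeasure μ] (hμ : MeasurePreserving T μ μ)
    {A : Set X} (hA : MeasurableSet A) (hTA : T ⁻¹' A = A) :
    MeasurePreserving T (ProbabilityTheory.cond μ A) (ProbabilityTheory.cond μ A) := by
  have h := hμ.restrict_preimage hA
  rw [hTA] at h
  exact h.smul_measure _

lemma measure_split (μ : Measure X) [IsProbabilityMeasure μ] {A : Set X} (hA : MeasurableSet A) :
    μ = μ A • ProbabilityTheory.cond μ A + μ Aᶜ • ProbabilityTheory.cond μ Aᶜ := by
  ext s hs
  simp only [Measure.add_apply, Measure.smul_apply, smul_eq_mul]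
  rw [mul_comm, mul_comm (μ Aᶜ), ProbabilityTheory.cond_add_cond_compl_eq hA]

lemma aux_convex {a b u v c : ℝ} (ha : 0 < a) (hb : 0 < b) (hab : a + b = 1) (hu : c ≤ u)
    (hv : c ≤ v) (h : a * u + b * v ≤ c) : u ≤ c ∧ v ≤ c := by
  have h0 : a * c + b * c = c := by rw [← add_mul, hab, one_mul]
  constructor
  · by_contra! hc
    have := mul_lt_mul_of_pos_left hc ha
    have := mul_le_mul_of_nonneg_left hv hb.le
    linarith
  · by_contra! hc
    have := mul_lt_mul_of_pos_left hc hb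
    have := mul_le_mul_of_nonneg_left hu ha.le
    linarith

lemma exists_ergodic (hT : Continuous T) {W : Set X} (hW : IsOpen W)
    (m : ProbabilityMeasure X) (hm : MeasurePreserving T (m : Measure X) (m : Measure X)) :
    ∃ μ : ProbabilityMeasure X, Ergodic T (μ : Measure X) ∧
      (μ : Measure X) W ≤ (m : Measure X) W := by
  have hTm := hT.measurable
  let I : Set (ProbabilityMeasure X) := {μ | μ.map hTm.aemeasurable = μ}
  have hI : IsClosed I := isClosed_eq (ProbabilityMeasure.continuous_map hT) continuous_id
  have hIm : ∀ μ : ProbabilityMeasure X, μ ∈ I ↔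
      MeasurePreserving T (μ : Measure X) (μ : Measure X) := by
    intro μ
    constructor
    · intro h
      refine ⟨hTm, ?_⟩
      have := congrArg (fun ν : ProbabilityMeasure X => (ν : Measure X)) h
      simpa using this
    · intro h
      apply Subtype.ext
      simpa using h.map_eq
  have hlsc : LowerSemicontinuous (fun μ : ProbabilityMeasure X => (μ : Measure X) W) := by
    rw [lowerSemicontinuous_iff_le_liminf]
    intro μ
    exact ProbabilityMeasure.le_liminf_measure_open_of_tendsto tendsto_id hW
  obtain ⟨μ₀, hμ₀I, hμ₀⟩ := (hlsc.lowerSemicontinuousOn I).exists_isMinOn ⟨m, (hIm m).2 hm⟩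
    hI.isCompact
  set c := (μ₀ : Measure X) W with hc
  have hmin : ∀ ν ∈ I, c ≤ (ν : Measure X) W := fun ν hν => hμ₀ hν
  let S : Set (ProbabilityMeasure X) := I ∩ {μ | (μ : Measure X) W ≤ c}
  have hS : IsClosed S := hI.inter (hlsc.isClosed_preimage c)
  let Φ : ProbabilityMeasure X → (BoundedContinuousFunction X ℝ → ℝ) :=
    fun μ f => ∫ x, f x ∂(μ : Measure X)
  have hΦ : Continuous Φ := by
    refine continuous_pi fun f => ?_
    rw [continuous_iff_continuousAt]
    intro μ
    exact (ProbabilityMeasure.tendsto_iff_forall_integral_tendsto.1 tendsto_id) f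
  obtain ⟨z, hz⟩ := (hS.isCompact.image hΦ).extremePoints_nonempty
    ⟨_, mem_image_of_mem Φ (show μ₀ ∈ S from ⟨hμ₀I, le_refl c⟩)⟩
  obtain ⟨⟨μ, hμS, rfl⟩, hext⟩ := hz
  have hμT := (hIm μ).1 hμS.1
  refine ⟨μ, ⟨hμT, ⟨?_⟩⟩, hμS.2.trans (hmin m ((hIm m).2 hm))⟩
  intro A hA hTA
  by_contra hne
  have hA0 : (μ : Measure X) A ≠ 0 := by
    intro h
    apply hne
    rw [Filter.eventuallyConst_set']
    left
    exact ae_eq_empty.2 h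
  have hA1 : (μ : Measure X) Aᶜ ≠ 0 := by
    intro h
    apply hne
    rw [Filter.eventuallyConst_set']
    right
    exact ae_eq_univ.2 h
  have hTAc : T ⁻¹' Aᶜ = Aᶜ := by rw [preimage_compl, hTA]
  have hp1 := ProbabilityTheory.cond_isProbabilityMeasure hA0
  have hp2 := ProbabilityTheory.cond_isProbabilityMeasure hA1
  let ν₁ : ProbabilityMeasure X := ⟨ProbabilityTheory.cond (μ : Measure X) A, hp1⟩
  let ν₂ : ProbabilityMeasure X := ⟨ProbabilityTheory.cond (μ : Measure X) Aᶜ, hp2⟩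
  have hν₁I : ν₁ ∈ I := (hIm ν₁).2 (cond_invariant _ hμT hA hTA)
  have hν₂I : ν₂ ∈ I := (hIm ν₂).2 (cond_invariant _ hμT hA.compl hTAc)
  have hsplit := measure_split (μ : Measure X) hA
  set a := ((μ : Measure X)).real A with ha
  set b := ((μ : Measure X)).real Aᶜ with hb
  have ha0 : 0 < a := ENNReal.toReal_pos hA0 (measure_ne_top _ _)
  have hb0 : 0 < b := ENNReal.toReal_pos hA1 (measure_ne_top _ _)
  have hab : a + b = 1 := by
    rw [ha, hb]; simpa using measureReal_add_measureReal_compl (μ := (μ : Measure X)) hA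
  have hWs : (μ : Measure X).real W = a * (ν₁ : Measure X).real W + b * (ν₂ : Measure X).real W := by
    have h1 := congrArg (fun ν : Measure X => ν.real W) hsplit
    rw [measureReal_add_apply (h₁ := by simp [ENNReal.mul_eq_top]) (h₂ := by simp [ENNReal.mul_eq_top])] at h1
    simp only [measureReal_ennreal_smul_apply] at h1
    exact h1
  have hcfin : c ≠ ⊤ := measure_ne_top _ _
  have toR : ∀ ν : ProbabilityMeasure X, c ≤ (ν : Measure X) W → c.toReal ≤ (ν : Measure X).real W :=
    fun ν h => ENNReal.toReal_mono (measure_ne_top _ _) h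
  have h1 := toR ν₁ (hmin _ hν₁I)
  have h2 := toR ν₂ (hmin _ hν₂I)
  have h3 : (μ : Measure X).real W ≤ c.toReal := ENNReal.toReal_mono hcfin hμS.2
  have back : ∀ ν : ProbabilityMeasure X, (ν : Measure X).real W ≤ c.toReal →
      (ν : Measure X) W ≤ c := fun ν h =>
    (ENNReal.toReal_le_toReal (measure_ne_top _ _) hcfin).1 h
  have h4 := aux_convex ha0 hb0 hab h1 h2 (hWs ▸ h3)
  have hν₁S : ν₁ ∈ S := ⟨hν₁I, back _ h4.1⟩
  have hν₂S : ν₂ ∈ S := ⟨hν₂I, back _ h4.2⟩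
  have hΦs : Φ μ = a • Φ ν₁ + b • Φ ν₂ := by
    funext f
    simp only [Φ, Pi.add_apply, Pi.smul_apply]
    have hInt : ∀ ν : Measure X, IsFiniteMeasure ν → Integrable f ν := fun ν _ => f.integrable ν
    conv_lhs => rw [hsplit]
    rw [integral_add_measure, integral_smul_measure, integral_smul_measure]
    · rfl
    · exact (hInt _ inferInstance).smul_measure (measure_ne_top _ _)
    · exact (hInt _ inferInstance).smul_measure (measure_ne_top _ _)
  have heq : Φ ν₁ = Φ μ := hext (mem_image_of_mem Φ hν₁S) (mem_image_of_mem Φ hν₂S)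
    ⟨a, b, ha0, hb0, hab, hΦs.symm⟩
  have hmeas : (ν₁ : Measure X) = (μ : Measure X) :=
    ext_of_forall_integral_eq_of_IsFiniteMeasure fun f => congrFun heq f
  apply hA1
  rw [← hmeas]
  show ProbabilityTheory.cond (μ : Measure X) A Aᶜ = 0
  rw [ProbabilityTheory.cond_apply hA]
  simp

/-- empirical measure -/
noncomputable def emp (T : X → X) (N : ℕ) (x : X) : Measure X :=
  (N : ENNReal)⁻¹ • ∑ k ∈ Finset.range N, Measure.dirac (T^[k] x)

lemma emp_prob {N : ℕ} (hN : 0 < N) (x : X) : IsProbabilityMeasure (emp T N x) := by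
  constructor
  simp only [emp, Measure.smul_apply, Measure.coe_finsetSum, Finset.sum_apply, measure_univ,
    Finset.sum_const, Finset.card_range, smul_eq_mul, nsmul_eq_mul, mul_one]
  exact ENNReal.inv_mul_cancel (by exact_mod_cast hN.ne') (by simp)

lemma emp_real {N : ℕ} (hN : 0 < N) (x : X) {U : Set X} (hU : MeasurableSet U) :
    (emp T N x).real U = 1 - (Set.ncard {k | k < N ∧ T^[k] x ∉ U} : ℝ) / N := by
  classical
  have := emp_prob (T := T) hN x
  have h1 : (emp T N x).real Uᶜ = (Set.ncard {k | k < N ∧ T^[k] x ∉ U} : ℝ) / N := by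
    have h2 : {k | k < N ∧ T^[k] x ∉ U} = ((Finset.range N).filter fun k => T^[k] x ∉ U : Finset ℕ) := by
      ext k; simp
    rw [h2, Set.ncard_coe_finset]
    simp only [emp, Measure.real, Measure.smul_apply, Measure.coe_finsetSum, Finset.sum_apply,
      smul_eq_mul, Measure.dirac_apply' _ hU.compl]
    simp only [Set.indicator_apply, mem_compl_iff, Pi.one_apply, Finset.sum_boole]
    simp only [ENNReal.toReal_mul, ENNReal.toReal_inv, ENNReal.toReal_natCast]
    rw [div_eq_inv_mul]
  have h3 := measureReal_add_measureReal_compl (μ := emp T N x) hU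
  rw [probReal_univ] at h3
  linarith

lemma emp_integral (N : ℕ) (x : X) (f : BoundedContinuousFunction X ℝ) :
    ∫ y, f y ∂(emp T N x) = (N : ℝ)⁻¹ * ∑ k ∈ Finset.range N, f (T^[k] x) := by
  rw [emp, integral_smul_measure, integral_finsetSum_measure (fun i _ => f.integrable _)]
  simp

/-- Limits of empirical measures. -/
lemma exists_invariant (hT : Continuous T) (N : ℕ → ℕ) (hN : ∀ k, k < N k) (x : ℕ → X)
    (U : ℕ → Set X) (hU : ∀ k, IsOpen (U k)) (hmono : Monotone U) (c : ℝ)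
    (hbad : ∀ k, c * N k < Set.ncard {i | i < N k ∧ T^[i] (x k) ∉ U k}) :
    ∃ m : ProbabilityMeasure X, MeasurePreserving T (m : Measure X) (m : Measure X) ∧
      (m : Measure X) (⋃ k, U k) ≤ ENNReal.ofReal (1 - c) := by
  have hNpos : ∀ k, 0 < N k := fun k => (Nat.zero_le k).trans_lt (hN k)
  let e : ℕ → ProbabilityMeasure X := fun k => ⟨emp T (N k) (x k), emp_prob (hNpos k) _⟩
  let F : Ultrafilter ℕ := Filter.hyperfilter ℕ
  have hF : (F : Filter ℕ) ≤ atTop := Nat.hyperfilter_le_atTop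
  obtain ⟨m, -, hm⟩ := isCompact_univ.ultrafilter_le_nhds (F.map e) (by simp)
  have hlim : Tendsto e F (𝓝 m) := hm
  refine ⟨m, ⟨hT.measurable, ?_⟩, ?_⟩
  · have : IsProbabilityMeasure (Measure.map T (m : Measure X)) :=
      Measure.isProbabilityMeasure_map hT.measurable.aemeasurable
    apply ext_of_forall_integral_eq_of_IsFiniteMeasure
    intro f
    rw [integral_map hT.measurable.aemeasurable f.continuous.aestronglyMeasurable]
    have h1 := ProbabilityMeasure.tendsto_iff_forall_integral_tendsto.1 hlim f
    have h2 := ProbabilityMeasure.tendsto_iff_forall_integral_tendsto.1 hlim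
      (f.compContinuous ⟨T, hT⟩)
    have h3 := h2.sub h1
    have h4 : Tendsto (fun k => (∫ y, (f.compContinuous ⟨T, hT⟩) y ∂(e k : Measure X)) -
        ∫ y, f y ∂(e k : Measure X)) F (𝓝 0) := by
      refine Tendsto.mono_left ?_ hF
      apply squeeze_zero_norm (a := fun k : ℕ => 2 * ‖f‖ * ((k : ℝ) + 1)⁻¹)
      · intro k
        have hk : (k : ℝ) + 1 ≤ N k := by exact_mod_cast hN k
        show ‖(∫ y, (f.compContinuous ⟨T, hT⟩) y ∂(emp T (N k) (x k))) -
          ∫ y, f y ∂(emp T (N k) (x k))‖ ≤ _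
        rw [emp_integral, emp_integral, ← mul_sub, ← Finset.sum_sub_distrib]
        have : ∀ i ∈ Finset.range (N k), (f.compContinuous ⟨T, hT⟩) (T^[i] (x k)) - f (T^[i] (x k))
            = f (T^[i+1] (x k)) - f (T^[i] (x k)) := by
          intro i _
          simp [Function.iterate_succ_apply']
        rw [Finset.sum_congr rfl this, Finset.sum_range_sub (fun i => f (T^[i] (x k)))]
        rw [norm_mul, norm_inv, Real.norm_natCast, mul_comm]
        have h5 : ‖f (T^[N k] (x k)) - f (T^[0] (x k))‖ ≤ 2 * ‖f‖ := by
          have := norm_sub_le (f (T^[N k] (x k))) (f (T^[0] (x k)))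
          have h6 := f.norm_coe_le_norm (T^[N k] (x k))
          have h7 := f.norm_coe_le_norm (T^[0] (x k))
          linarith
        gcongr
      · have : Tendsto (fun k : ℕ => ((k : ℝ) + 1)⁻¹) atTop (𝓝 0) :=
          tendsto_inv_atTop_zero.comp
            (tendsto_atTop_add_const_right _ _ tendsto_natCast_atTop_atTop)
        simpa using this.const_mul (2 * ‖f‖)
    have := tendsto_nhds_unique h3 h4
    simp only [BoundedContinuousFunction.compContinuous_apply, ContinuousMap.coe_mk] at this
    linarith
  · rw [hmono.measure_iUnion]
    refine iSup_le fun j => ?_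
    refine (ProbabilityMeasure.le_liminf_measure_open_of_tendsto hlim (hU j)).trans ?_
    refine liminf_le_of_frequently_le' (Eventually.frequently ?_)
    filter_upwards [hF (eventually_ge_atTop j)] with k hk
    have h1 : (emp T (N k) (x k)).real (U k) ≤ 1 - c := by
      rw [emp_real (hNpos k) _ (hU k).measurableSet]
      have : c < (Set.ncard {i | i < N k ∧ T^[i] (x k) ∉ U k} : ℝ) / N k := by
        rw [lt_div_iff₀ (by exact_mod_cast hNpos k)]
        exact hbad k
      linarith
    have := emp_prob (T := T) (hNpos k) (x k)
    calc (e k : Measure X) (U j) ≤ emp T (N k) (x k) (U k) := measure_mono (hmono hk)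
      _ = ENNReal.ofReal ((emp T (N k) (x k)).real (U k)) := by
        rw [ofReal_measureReal]
      _ ≤ _ := ENNReal.ofReal_le_ofReal h1

lemma exists_ergodic' [Nonempty X] (hT : Continuous T) : ∃ μ : Measure X, μ ∈ ergodicMeasures T := by
  obtain ⟨m, hm, -⟩ := exists_invariant hT (fun k => k + 1) (fun k => Nat.lt_succ_self k)
    (fun _ => Classical.arbitrary X) (fun _ => ∅) (fun _ => isOpen_empty) monotone_const (-1)
    (fun k => by
      have h : (0:ℝ) ≤ Set.ncard {i | i < k + 1 ∧ T^[i] (Classical.arbitrary X) ∉ (∅ : Set X)} := by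
        positivity
      refine lt_of_lt_of_le ?_ h
      push_cast; linarith [(Nat.cast_nonneg k : (0:ℝ) ≤ k)])
  obtain ⟨μ, hμ, -⟩ := exists_ergodic hT isOpen_empty m hm
  exact ⟨μ, inferInstance, hμ⟩

/-- uniform frequency of visits -/
lemma uniform_freq (hT : Continuous T) (U : ℕ → Set X) (hU : ∀ k, IsOpen (U k))
    (hmono : Monotone U) (c : ℝ)
    (h : ∀ μ ∈ ergodicMeasures T, ENNReal.ofReal (1 - c) < μ (⋃ k, U k)) :
    ∃ k N₀ : ℕ, ∀ N ≥ N₀, ∀ x, (Set.ncard {i | i < N ∧ T^[i] x ∉ U k} : ℝ) ≤ c * N := by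
  by_contra! hcon
  choose N hN x hx using fun k => hcon k (k + 1)
  obtain ⟨m, hm, hmU⟩ := exists_invariant hT N (fun k => hN k) x U hU hmono c hx
  obtain ⟨μ, hμ, hμW⟩ := exists_ergodic hT (isOpen_iUnion hU) m hm
  exact absurd (h μ ⟨inferInstance, hμ⟩) (not_lt.2 (hμW.trans hmU))

end erg

section upper
variable [MetricSpace X] [CompactSpace X] [MeasurableSpace X] [BorelSpace X] {T : X → X}

lemma level0 (hT : Continuous T) (μ : Measure X) [IsProbabilityMeasure μ] (t : ℝ) (n : ℕ)
    {ε : ℝ} (hε : 0 < ε) (D : Finset X) (hD : ∀ x, ∃ y ∈ D, x ∈ dynBall T n y ε) :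
    ∃ C ⊆ D, (C.card : ℝ) ≤ Real.exp (n * t) ∧
      {x | Real.exp (-(n * t)) ≤ μ.real (dynBall T n x ε)} ⊆ ⋃ y ∈ C, dynBall T n y (3 * ε) := by
  classical
  set A := {x | Real.exp (-(n * t)) ≤ μ.real (dynBall T n x ε)} with hA
  let good : Finset X → Prop := fun E => (E : Set X) ⊆ A ∧
    (E : Set X).PairwiseDisjoint (fun x => dynBall T n x ε)
  have hcard : ∀ E, good E → (E.card : ℝ) ≤ Real.exp (n * t) := by
    intro E hE
    have h1 : ∑ x ∈ E, μ.real (dynBall T n x ε) ≤ 1 := by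
      rw [← measureReal_biUnion_finset hE.2 (fun x _ => (isOpen_dynBall hT n x hε).measurableSet)]
      exact measureReal_le_one
    have h2 : (E.card : ℝ) * Real.exp (-(n * t)) ≤ ∑ x ∈ E, μ.real (dynBall T n x ε) := by
      rw [← nsmul_eq_mul]
      exact Finset.card_nsmul_le_sum _ _ _ fun x hx => hE.1 hx
    have h3 := h2.trans h1
    rwa [Real.exp_neg, ← div_eq_mul_inv, div_le_one (Real.exp_pos _)] at h3
  let Sm : Set ℕ := {m | ∃ E, good E ∧ E.card = m}
  have hne : Sm.Nonempty := ⟨0, ∅, ⟨by simp, by simp⟩, rfl⟩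
  have hbdd : BddAbove Sm := by
    refine ⟨⌊Real.exp (n * t)⌋₊, ?_⟩
    rintro m ⟨E, hE, rfl⟩
    exact Nat.le_floor (hcard E hE)
  obtain ⟨E, hE, hEc⟩ := Nat.sSup_mem hne hbdd
  choose f hfD hf using hD
  refine ⟨E.image f, ?_, ?_, ?_⟩
  · intro y hy
    obtain ⟨e, -, rfl⟩ := Finset.mem_image.1 hy
    exact hfD e
  · refine le_trans ?_ (hcard E hE)
    exact_mod_cast Finset.card_image_le
  · intro x hx
    have key : ∃ e ∈ E, ∃ z, z ∈ dynBall T n x ε ∧ z ∈ dynBall T n e ε := by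
      by_contra! hcon
      have hxE : x ∉ E := by
        intro hxE
        have hxx : x ∈ dynBall T n x ε := by simp [mem_dynBall_iff T hε, hε]
        exact hcon x hxE x hxx hxx
      have hgood : good (insert x E) := by
        refine ⟨?_, ?_⟩
        · rw [Finset.coe_insert]
          exact Set.insert_subset hx hE.1
        · rw [Finset.coe_insert]
          refine hE.2.insert fun e he _ => ?_
          exact Set.disjoint_left.2 fun z hz => hcon e he z hz
      have h1 : (insert x E).card ≤ sSup Sm := le_csSup hbdd ⟨_, hgood, rfl⟩
      rw [Finset.card_insert_of_notMem hxE, hEc] at h1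
      omega
    obtain ⟨e, he, z, hzx, hze⟩ := key
    refine Set.mem_iUnion₂.2 ⟨f e, Finset.mem_image_of_mem f he, ?_⟩
    rw [mem_dynBall_iff T (by positivity)]
    intro k hk
    have h1 := (mem_dynBall_iff T hε).1 hzx k hk
    have h2 := (mem_dynBall_iff T hε).1 hze k hk
    have h3 := (mem_dynBall_iff T hε).1 (hf e) k hk
    have h4 := dist_triangle (T^[k] (f e)) (T^[k] e) (T^[k] x)
    have h5 := dist_triangle_right (T^[k] e) (T^[k] x) (T^[k] z)
    linarith

lemma isOpen_goodSet (hT : Continuous T) {W : Set X} (hW : IsOpen W) (L b : ℕ) :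
    IsOpen (goodSet T W L b) := by
  rw [isOpen_iff_mem_nhds]
  intro x hx
  have hx' : Set.ncard {k | k < L ∧ T^[k] x ∉ W} ≤ b := hx
  have h1 : ∀ᶠ y in 𝓝 x, ∀ k ∈ Finset.range L, T^[k] x ∈ W → T^[k] y ∈ W := by
    rw [Filter.eventually_all_finset]
    intro k _
    by_cases h : T^[k] x ∈ W
    · filter_upwards [(hT.iterate k).continuousAt.preimage_mem_nhds (hW.mem_nhds h)] with y hy _
      exact hy
    · exact Eventually.of_forall fun y hy => absurd hy h
  filter_upwards [h1] with y hy
  refine le_trans (Set.ncard_le_ncard ?_ (bad_finite T W L x)) hx'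
  rintro k ⟨hk, hk'⟩
  exact ⟨hk, fun h => hk' (hy k (Finset.mem_range.2 hk) h)⟩

lemma markov (hT : Continuous T) (μ : Measure X) [IsProbabilityMeasure μ]
    (hμ : MeasurePreserving T μ μ) {W : Set X} (hW : IsOpen W) {L : ℕ} (hL : 1 ≤ L) {δ : ℝ}
    (hδ : 0 < δ) (h : μ.real Wᶜ ≤ δ ^ 2) :
    1 - δ ≤ μ.real (goodSet T W L ⌊δ * L⌋₊) := by
  classical
  have hmeas := (isOpen_goodSet hT hW L ⌊δ * L⌋₊).measurableSet
  let g : X → ℝ := fun x => ∑ k ∈ Finset.range L, (T^[k] ⁻¹' Wᶜ).indicator (fun _ => (1 : ℝ)) x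
  have hgm : ∀ k, MeasurableSet (T^[k] ⁻¹' Wᶜ) := fun k =>
    (hT.iterate k).measurable hW.measurableSet.compl
  have hg : ∀ x, g x = Set.ncard {k | k < L ∧ T^[k] x ∉ W} := by
    intro x
    have h2 : {k | k < L ∧ T^[k] x ∉ W} =
        ((Finset.range L).filter fun k => T^[k] x ∉ W : Finset ℕ) := by
      ext k; simp
    rw [h2, Set.ncard_coe_finset]
    simp only [g, Set.indicator_apply, mem_preimage, mem_compl_iff, Finset.sum_boole]
  have hInt : ∫ x, g x ∂μ = L * μ.real Wᶜ := by
    simp only [g]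
    rw [integral_finsetSum _ (fun k _ => (integrable_const (1:ℝ)).indicator (hgm k))]
    have : ∀ k ∈ Finset.range L, ∫ x, (T^[k] ⁻¹' Wᶜ).indicator (fun _ => (1 : ℝ)) x ∂μ
        = μ.real Wᶜ := by
      intro k _
      rw [integral_indicator_const _ (hgm k), smul_eq_mul, mul_one]
      simp only [Measure.real]
      rw [(hμ.iterate k).measure_preimage hW.measurableSet.compl.nullMeasurableSet]
    rw [Finset.sum_congr rfl this]
    simp
  have hgi : Integrable g μ :=
    integrable_finsetSum _ fun k _ => (integrable_const (1:ℝ)).indicator (hgm k)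
  have hmk := mul_meas_ge_le_integral_of_nonneg (μ := μ) (f := g)
    (Eventually.of_forall fun x => by rw [hg x]; simp) hgi (δ * L)
  have hLpos : (0:ℝ) < L := by exact_mod_cast hL
  have hsub : (goodSet T W L ⌊δ * L⌋₊)ᶜ ⊆ {x | δ * L ≤ g x} := by
    intro x hx
    have hx' : ⌊δ * L⌋₊ < Set.ncard {k | k < L ∧ T^[k] x ∉ W} := not_le.1 hx
    have := (Nat.floor_lt (by positivity)).1 hx'
    show δ * L ≤ g x
    rw [hg]
    exact this.le
  have h1 : μ.real (goodSet T W L ⌊δ * L⌋₊)ᶜ ≤ μ.real {x | δ * L ≤ g x} :=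
    measureReal_mono hsub
  have h2 : μ.real {x | δ * L ≤ g x} ≤ δ := by
    rw [hInt] at hmk
    have h3 : (δ * L) * μ.real {x | δ * L ≤ g x} ≤ (δ * L) * δ := by
      refine hmk.trans ?_
      nlinarith
    exact le_of_mul_le_mul_left h3 (by positivity)
  have h3 := measureReal_add_measureReal_compl (μ := μ) hmeas
  rw [probReal_univ] at h3
  linarith

lemma pow_floor_le {M η δ : ℝ} (hM : 1 ≤ M) (hη : 0 ≤ η) (hδ : 0 ≤ δ)
    (hδM : δ * Real.log (2 * M) = η) (c : ℝ) (hc : 0 ≤ c) (L : ℕ) :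
    (2 * M) ^ ⌊c * δ * L⌋₊ ≤ Real.exp (L * (c * η)) := by
  have h2M : 0 < 2 * M := by linarith
  have hlog : 0 ≤ Real.log (2 * M) := Real.log_nonneg (by linarith)
  calc (2 * M) ^ ⌊c * δ * L⌋₊ = Real.exp (⌊c * δ * L⌋₊ * Real.log (2 * M)) := by
        rw [Real.exp_nat_mul, Real.exp_log h2M]
    _ ≤ Real.exp (L * (c * η)) := by
        apply Real.exp_le_exp.2
        have h1 := Nat.floor_le (show 0 ≤ c * δ * L by positivity)
        calc _ ≤ (c * δ * L) * Real.log (2 * M) := by gcongr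
          _ = _ := by rw [← hδM]; ring

lemma level1 (hT : Continuous T) {ε : ℝ} (hε : 0 < ε) {t η δ M : ℝ} (ht : 0 ≤ t) (hη : 0 < η)
    (hδ : 0 < δ) (hM : 1 ≤ M) (hδM : δ * Real.log (2 * M) = η)
    (hX : Cov T (6 * ε) 1 univ M) (n : ℕ) (hn1 : 1 ≤ n) (hn : Real.exp (-(n * η)) ≤ 1 / 2) (a : ℝ)
    (ha : 0 < a) :
    ∃ (L : ℕ) (V : Set X) (m : ℝ), 1 ≤ L ∧ IsOpen V ∧ 0 ≤ m ∧ Cov T (6 * ε) L V m ∧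
      m * Real.exp (-(L * (t + 3 * η))) ≤ a ∧
      ∀ μ : Measure X, IsProbabilityMeasure μ → MeasurePreserving T μ μ →
        ∃ W, IsOpen W ∧ {x | Real.exp (-(n * t)) ≤ μ.real (dynBall T n x ε)} ⊆ W ∧
          (μ.real Wᶜ ≤ δ ^ 2 → 1 - δ ≤ μ.real V) := by
  classical
  obtain ⟨D, hD⟩ := exists_span hT n hε
  let 𝒞 : Finset (Finset X) := D.powerset.filter fun C => (C.card : ℝ) ≤ Real.exp (n * t)
  let Wf : Finset X → Set X := fun C => ⋃ y ∈ C, dynBall T n y (3 * ε)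
  have hWo : ∀ C, IsOpen (Wf C) := fun C =>
    isOpen_biUnion fun y _ => isOpen_dynBall hT n y (by positivity)
  set c : ℝ := 𝒞.card * Real.exp (n * (t + η)) with hc
  -- choice of the length
  obtain ⟨L, hL1, hLc⟩ : ∃ L : ℕ, 1 ≤ L ∧ c * Real.exp (-(L * η)) ≤ a := by
    have h1 : Tendsto (fun L : ℕ => c * Real.exp (-(L * η))) atTop (𝓝 (c * 0)) := by
      refine Tendsto.const_mul c ?_
      refine Real.tendsto_exp_neg_atTop_nhds_zero.comp ?_
      exact tendsto_natCast_atTop_atTop.atTop_mul_const hη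
    rw [mul_zero] at h1
    obtain ⟨L, h2, h3⟩ := ((h1.eventually_le_const ha).and (eventually_ge_atTop 1)).exists
    exact ⟨L, h3, h2⟩
  let V : Set X := ⋃ C ∈ 𝒞, goodSet T (Wf C) L ⌊δ * L⌋₊
  have hcov : ∀ C ∈ 𝒞, Cov T (6 * ε) L (goodSet T (Wf C) L ⌊δ * L⌋₊)
      (Real.exp (n * (t + η)) * Real.exp (L * (t + 2 * η))) := by
    intro C hC
    have hCc : (C.card : ℝ) ≤ Real.exp (n * t) := (Finset.mem_filter.1 hC).2
    have hb := cov_balls (T := T) n C (show 0 < 3 * ε by positivity)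
    rw [show 2 * (3 * ε) = 6 * ε by ring] at hb
    have := greedy (T := T) (r := 6 * ε) ({()} : Finset Unit) (fun _ => n) (fun _ => Wf C)
      (fun _ => (C.card : ℝ)) (t + η) M (Real.exp (n * (t + η))) (by linarith) hM
      (Real.one_le_exp (by positivity)) (by simpa using hn1) (by simp) (by simpa using hb)
      (by
        simp only [Finset.sum_singleton]
        calc (C.card : ℝ) * Real.exp (-(n * (t + η)))
            ≤ Real.exp (n * t) * Real.exp (-(n * (t + η))) := by gcongr
          _ = Real.exp (-(n * η)) := by rw [← Real.exp_add]; congr 1; ring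
          _ ≤ 1 / 2 := hn)
      (by simp) hX L ⌊δ * L⌋₊
    rw [show (⋃ j ∈ ({()} : Finset Unit), (fun _ => Wf C) j) = Wf C by
      ext z; simp only [Set.mem_iUnion, Finset.mem_singleton, exists_prop]
      exact ⟨fun ⟨_, _, h⟩ => h, fun h => ⟨(), trivial, h⟩⟩] at this
    refine this.mono le_rfl le_rfl ?_
    have hp := pow_floor_le hM hη.le hδ.le hδM 1 zero_le_one L
    rw [one_mul, one_mul] at hp
    calc _ ≤ Real.exp (n * (t + η)) * Real.exp (L * (t + η)) * Real.exp (L * η) := by gcongr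
      _ = _ := by rw [mul_assoc, ← Real.exp_add]; congr 2; ring
  have hcovV := Cov.biUnion 𝒞 _ _ hcov
  rw [Finset.sum_const, nsmul_eq_mul] at hcovV
  refine ⟨L, V, _, hL1, isOpen_biUnion fun C _ => isOpen_goodSet hT (hWo C) _ _, by positivity,
    hcovV, ?_, ?_⟩
  · calc _ = c * (Real.exp (L * (t + 2 * η)) * Real.exp (-(L * (t + 3 * η)))) := by
          rw [hc]; ring
      _ = c * Real.exp (-(L * η)) := by rw [← Real.exp_add]; congr 2; ring
      _ ≤ a := hLc
  · intro μ hμp hμ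
    obtain ⟨C, hCD, hCc, hAC⟩ := level0 hT μ t n hε D hD
    refine ⟨Wf C, hWo C, hAC, fun h => (markov hT μ hμ (hWo C) hL1 hδ h).trans ?_⟩
    refine measureReal_mono ?_ (measure_ne_top _ _)
    exact Set.subset_biUnion_of_mem (u := fun C => goodSet T (Wf C) L ⌊δ * L⌋₊)
      (show C ∈ (𝒞 : Set (Finset X)) from
        Finset.mem_coe.2 (Finset.mem_filter.2 ⟨Finset.mem_powerset.2 hCD, hCc⟩))

lemma main_upper (hT : Continuous T) {ε : ℝ} (hε : 0 < ε) {t : ℝ} (ht : 0 ≤ t)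
    (h : ∀ μ ∈ ergodicMeasures T, ∀ᵐ x ∂μ, ∀ᶠ n : ℕ in atTop,
      Real.exp (-(n * t)) ≤ μ.real (dynBall T n x ε)) {η : ℝ} (hη : 0 < η) :
    ∃ K : ℝ, 0 < K ∧ ∀ᶠ N : ℕ in atTop, Cov T (6 * ε) N univ (K * Real.exp (N * (t + 5 * η))) := by
  classical
  obtain ⟨M, hM, hX, hMη⟩ : ∃ M : ℝ, 1 ≤ M ∧ Cov T (6 * ε) 1 univ M ∧
      4 * η ≤ Real.log (2 * M) := by
    obtain ⟨M, hM, hX⟩ := exists_cov (T := T) hT 1 (show 0 < 6 * ε by positivity)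
    refine ⟨max M (Real.exp (4 * η)), le_max_of_le_left hM,
      hX.mono le_rfl le_rfl (le_max_left _ _), ?_⟩
    rw [Real.le_log_iff_exp_le (by positivity)]
    have h1 := le_max_right M (Real.exp (4 * η))
    have h2 := Real.exp_pos (4 * η)
    linarith
  have hlog : 0 < Real.log (2 * M) := Real.log_pos (by linarith)
  set δ := η / Real.log (2 * M) with hδdef
  have hδ : 0 < δ := div_pos hη hlog
  have hδM : δ * Real.log (2 * M) = η := div_mul_cancel₀ _ hlog.ne'
  have hδ4 : δ ≤ 1 / 4 := by
    rw [hδdef, div_le_iff₀ hlog]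
    linarith
  obtain ⟨n₀, hn₀⟩ : ∃ n₀ : ℕ, ∀ n ≥ n₀, Real.exp (-(n * η)) ≤ 1 / 2 := by
    have h1 : Tendsto (fun L : ℕ => Real.exp (-(L * η))) atTop (𝓝 0) :=
      Real.tendsto_exp_neg_atTop_nhds_zero.comp (tendsto_natCast_atTop_atTop.atTop_mul_const hη)
    exact eventually_atTop.1 (h1.eventually_le_const (by norm_num))
  choose L V m hL1 hVo hm0 hVc hma hVμ using fun j : ℕ =>
    level1 hT hε ht hη hδ hM hδM hX (j + (n₀ + 1)) (by omega) (hn₀ _ (by omega))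
      ((1 / 2 : ℝ) ^ (j + 2)) (by positivity)
  let U : ℕ → Set X := fun k => ⋃ j ∈ Finset.range (k + 1), V j
  have hUo : ∀ k, IsOpen (U k) := fun k => isOpen_biUnion fun j _ => hVo j
  have hUm : Monotone U := by
    intro a b hab
    refine Set.biUnion_subset_biUnion_left fun j hj => ?_
    have : j < a + 1 := Finset.mem_range.1 hj
    exact Finset.mem_range.2 (by omega)
  have hVU : ∀ j, V j ⊆ ⋃ k, U k := fun j =>
    (Set.subset_biUnion_of_mem (u := V) (show j ∈ (Finset.range (j+1)) from by simp)).trans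
      (Set.subset_iUnion U j)
  have herg : ∀ μ ∈ ergodicMeasures T, ENNReal.ofReal (1 - 2 * δ) < μ (⋃ k, U k) := by
    intro μ hμ
    have hμp : IsProbabilityMeasure μ := hμ.1
    choose W hWo hAW hWV using fun j => hVμ j μ hμ.1 hμ.2.toMeasurePreserving
    have hlim : Tendsto (fun j => μ (W j)ᶜ) atTop (𝓝 (μ ∅)) := by
      refine tendsto_measure_of_ae_tendsto_indicator_of_isFiniteMeasure atTop MeasurableSet.empty
        (fun j => (hWo j).measurableSet.compl) ?_
      filter_upwards [h μ hμ] with x hx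
      have hx' := (tendsto_add_atTop_nat (n₀ + 1)).eventually hx
      filter_upwards [hx'] with j hj
      have : x ∈ W j := hAW j hj
      simp [this]
    rw [measure_empty] at hlim
    have hpos : (0 : ENNReal) < ENNReal.ofReal (δ ^ 2) := ENNReal.ofReal_pos.2 (by positivity)
    obtain ⟨j, hj⟩ := (hlim.eventually_le_const hpos).exists
    have h1 := hWV j (ENNReal.toReal_le_of_le_ofReal (by positivity) hj)
    have h2 : μ.real (V j) ≤ μ.real (⋃ k, U k) := measureReal_mono (hVU j)
    rw [← ofReal_measureReal (μ := μ)]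
    rw [ENNReal.ofReal_lt_ofReal_iff (by linarith)]
    linarith
  obtain ⟨k, N₀, hN₀⟩ := uniform_freq hT U hUo hUm (2 * δ) herg
  set t2 := t + 3 * η with ht2
  have ht20 : 0 ≤ t2 := by positivity
  set K : ℝ := 1 + ∑ j ∈ Finset.range (k + 1), Real.exp (L j * t2) with hK
  have hK1 : 1 ≤ K := by
    have : 0 ≤ ∑ j ∈ Finset.range (k + 1), Real.exp (L j * t2) :=
      Finset.sum_nonneg fun _ _ => (Real.exp_pos _).le
    linarith
  have hgr := greedy (T := T) (r := 6 * ε) (Finset.range (k + 1)) L V m t2 M K ht20 hM hK1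
    (fun j _ => hL1 j) (fun j _ => hm0 j) (fun j _ => hVc j)
    (by
      calc _ ≤ ∑ j ∈ Finset.range (k + 1), (1 / 2 : ℝ) ^ (j + 2) :=
            Finset.sum_le_sum fun j _ => hma j
        _ = (1 / 2) ^ 2 * ∑ j ∈ Finset.range (k + 1), (1 / 2 : ℝ) ^ j := by
            rw [Finset.mul_sum]; exact Finset.sum_congr rfl fun j _ => by rw [pow_add]; ring
        _ ≤ (1 / 2) ^ 2 * 2 := by
            have := sum_geometric_two_le (k + 1)
            gcongr
        _ = 1 / 2 := by norm_num)
    (fun j hj => by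
      have := Finset.single_le_sum (f := fun j => Real.exp (L j * t2))
        (fun _ _ => (Real.exp_pos _).le) hj
      linarith) hX
  refine ⟨K, by linarith, ?_⟩
  filter_upwards [eventually_ge_atTop N₀] with N hN
  refine (hgr N ⌊2 * δ * N⌋₊).mono le_rfl (fun x _ => Nat.le_floor (hN₀ N hN x)) ?_
  have hp := pow_floor_le hM hη.le hδ.le hδM 2 (by norm_num) N
  calc _ ≤ K * Real.exp (N * t2) * Real.exp (N * (2 * η)) := by gcongr
    _ = _ := by rw [mul_assoc, ← Real.exp_add, ht2]; congr 2; ring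

end upper

section final
variable [MetricSpace X] [CompactSpace X] {T : X → X}

lemma sepNum_le {n : ℕ} {r m : ℝ} (hr : 0 < r) (h : Cov T r n univ m) :
    (sepNum T n univ r : ℝ) ≤ m := by
  have hne : {m | ∃ E : Finset X, (E : Set X) ⊆ univ ∧
    (∀ x ∈ E, ∀ y ∈ E, x ≠ y → r < dynDist T n x y) ∧ E.card = m}.Nonempty :=
    ⟨0, ∅, by simp, by simp, rfl⟩
  have hb : ∀ k ∈ {m | ∃ E : Finset X, (E : Set X) ⊆ univ ∧
    (∀ x ∈ E, ∀ y ∈ E, x ≠ y → r < dynDist T n x y) ∧ E.card = m}, (k : ℝ) ≤ m := by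
    rintro k ⟨E, -, hE, rfl⟩
    exact sep_card_le h E fun x hx y hy hxy => (lt_dynDist_iff T hr.le).1 (hE x hx y hy hxy)
  exact hb _ (Nat.sSup_mem hne ⟨⌊m⌋₊, fun k hk => Nat.le_floor (hb k hk)⟩)

lemma card_le_sepNum (hT : Continuous T) {n : ℕ} {r : ℝ} (hr : 0 < r) (E : Finset X)
    (hE : ∀ x ∈ E, ∀ y ∈ E, x ≠ y → r < dynDist T n x y) : E.card ≤ sepNum T n univ r := by
  obtain ⟨m, -, hm⟩ := exists_cov hT n hr
  refine le_csSup ⟨⌊m⌋₊, ?_⟩ ⟨E, by simp, hE, rfl⟩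
  rintro k ⟨F, -, hF, rfl⟩
  exact Nat.le_floor <| sep_card_le hm F fun x hx y hy hxy =>
    (lt_dynDist_iff T hr.le).1 (hF x hx y hy hxy)

lemma sepEnt_nonneg (T : X → X) (r : ℝ) : 0 ≤ sepEnt T univ r := by
  refine le_limsup_of_frequently_le (Eventually.of_forall fun n => ?_).frequently ⟨⊤, by simp⟩
  have : 0 ≤ Real.log (sepNum T n univ r) / n :=
    div_nonneg (Real.log_natCast_nonneg _) (Nat.cast_nonneg n)
  exact_mod_cast this

lemma sepEnt_le_of_cov {r K s : ℝ} (hr : 0 < r) (hK : 0 < K) (hs : 0 ≤ s)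
    (h : ∀ᶠ N : ℕ in atTop, Cov T r N univ (K * Real.exp (N * s))) :
    sepEnt T univ r ≤ (s : EReal) := by
  refine EReal.le_of_forall_lt_iff_le.1 fun z hz => ?_
  have hz' : s < z := by exact_mod_cast hz
  refine limsup_le_of_le ⟨⊥, by simp⟩ ?_
  have h1 : Tendsto (fun N : ℕ => |Real.log K| / N) atTop (𝓝 0) :=
    tendsto_const_div_atTop_nhds_zero_nat _
  filter_upwards [h, h1.eventually_le_const (sub_pos.2 hz'), eventually_ge_atTop 1] with N hN h2 hN1
  have hNpos : (0 : ℝ) < N := by exact_mod_cast hN1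
  have h3 := sepNum_le hr hN
  refine EReal.coe_le_coe_iff.2 ?_
  rw [div_le_iff₀ hNpos] at h2 ⊢
  rcases Nat.eq_zero_or_pos (sepNum T N univ r) with h0 | h0
  · rw [h0]; simp; nlinarith
  · have h4 : Real.log (sepNum T N univ r) ≤ Real.log (K * Real.exp (N * s)) :=
      Real.log_le_log (by exact_mod_cast h0) h3
    rw [Real.log_mul hK.ne' (Real.exp_pos _).ne', Real.log_exp] at h4
    have := le_abs_self (Real.log K)
    nlinarith

variable [MeasurableSpace X] [BorelSpace X]

lemma neg_log_nonneg (μ : Measure X) [IsProbabilityMeasure μ] (A : Set X) (n : ℕ) :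
    0 ≤ -(ENNReal.log (μ A)) / (n : EReal) := by
  refine EReal.div_nonneg ?_ (by exact_mod_cast Nat.zero_le n)
  rw [EReal.neg_nonneg]
  rw [← ENNReal.log_one]
  exact ENNReal.log_monotone prob_le_one

lemma brinKatok_nonneg (μ : Measure X) [IsProbabilityMeasure μ] (x : X) (r : ℝ) :
    0 ≤ brinKatok T μ x r :=
  le_limsup_of_frequently_le
    (Eventually.of_forall fun n => neg_log_nonneg μ _ n).frequently ⟨⊤, by simp⟩

lemma div_lt_imp (μ : Measure X) [IsProbabilityMeasure μ] (A : Set X) {n : ℕ} (hn : 1 ≤ n) (t : ℝ) :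
    -(ENNReal.log (μ A)) / (n : EReal) ≤ (t : EReal) ↔ Real.exp (-(n * t)) ≤ μ.real A := by
  have hnpos : (0 : ℝ) < n := by exact_mod_cast hn
  have hc : (n : EReal) = ((n : ℝ) : EReal) := rfl
  rw [hc, EReal.div_le_iff_le_mul (by exact_mod_cast hnpos) (EReal.coe_ne_top _)]
  rw [EReal.neg_le, ← EReal.coe_mul, ← EReal.coe_neg]
  rw [show ((-(n * t) : ℝ) : EReal) = ENNReal.log (ENNReal.ofReal (Real.exp (-(n * t)))) by
    rw [ENNReal.log_ofReal_of_pos (Real.exp_pos _), Real.log_exp]]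
  rw [ENNReal.log_le_log_iff, ENNReal.ofReal_le_iff_le_toReal (measure_ne_top _ _)]
  rfl

lemma gval_nonneg [Nonempty X] (hT : Continuous T) (r : ℝ) :
    0 ≤ ⨆ μ ∈ ergodicMeasures T, essSup (fun x => brinKatok T μ x r) μ := by
  obtain ⟨μ, hμ⟩ := exists_ergodic' hT
  have hμp : IsProbabilityMeasure μ := hμ.1
  refine le_trans ?_ (le_iSup₂ (f := fun μ (_ : μ ∈ ergodicMeasures T) =>
    essSup (fun x => brinKatok T μ x r) μ) μ hμ)
  have h1 : essSup (fun _ : X => (0 : EReal)) μ = 0 := essSup_const _ (NeZero.ne μ)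
  rw [← h1]
  exact essSup_mono_ae (Eventually.of_forall fun x => brinKatok_nonneg μ x r)

lemma upper [Nonempty X] (hT : Continuous T) {ε : ℝ} (hε : 0 < ε) :
    sepEnt T univ (6 * ε) ≤ ⨆ μ ∈ ergodicMeasures T, essSup (fun x => brinKatok T μ x ε) μ := by
  have hg0 := gval_nonneg hT ε
  refine EReal.le_of_forall_lt_iff_le.1 fun t ht => ?_
  have ht0 : 0 ≤ t := by exact_mod_cast (hg0.trans ht.le)
  have hmain : ∀ μ ∈ ergodicMeasures T, ∀ᵐ x ∂μ, ∀ᶠ n : ℕ in atTop,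
      Real.exp (-(n * t)) ≤ μ.real (dynBall T n x ε) := by
    intro μ hμ
    have hμp : IsProbabilityMeasure μ := hμ.1
    have h1 : essSup (fun x => brinKatok T μ x ε) μ < t :=
      lt_of_le_of_lt (le_iSup₂ (f := fun μ (_ : μ ∈ ergodicMeasures T) =>
        essSup (fun x => brinKatok T μ x ε) μ) μ hμ) ht
    filter_upwards [ae_lt_of_essSup_lt h1] with x hx
    have h2 := eventually_lt_of_limsup_lt (show limsup _ atTop < (t : EReal) from hx)
    filter_upwards [h2, eventually_ge_atTop 1] with n hn hn1
    exact (div_lt_imp μ _ hn1 t).1 hn.le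
  refine EReal.le_of_forall_lt_iff_le.1 fun z hz => ?_
  have hz' : t < z := by exact_mod_cast hz
  obtain ⟨K, hK, hcov⟩ := main_upper hT hε ht0 hmain (show 0 < (z - t) / 5 by linarith)
  have := sepEnt_le_of_cov (by positivity) hK (by linarith) hcov
  rwa [show t + 5 * ((z - t) / 5) = z by ring] at this

lemma lower_aux (hT : Continuous T) (μ : Measure X) [IsProbabilityMeasure μ] {ε : ℝ} (hε : 0 < ε)
    (n : ℕ) (b : ℝ) :
    μ {x | ¬ b ≤ μ.real (dynBall T n x (2 * ε))} ≤
      sepNum T n univ ε * ENNReal.ofReal b := by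
  classical
  set A := {x | ¬ b ≤ μ.real (dynBall T n x (2 * ε))} with hA
  let good : Finset X → Prop := fun E => (E : Set X) ⊆ A ∧
    (∀ x ∈ E, ∀ y ∈ E, x ≠ y → ε < dynDist T n x y)
  let Sm : Set ℕ := {m | ∃ E, good E ∧ E.card = m}
  have hne : Sm.Nonempty := ⟨0, ∅, ⟨by simp, by simp⟩, rfl⟩
  have hbdd : BddAbove Sm := by
    refine ⟨sepNum T n univ ε, ?_⟩
    rintro m ⟨E, hE, rfl⟩
    exact card_le_sepNum hT hε E hE.2
  obtain ⟨E, hE, hEc⟩ := Nat.sSup_mem hne hbdd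
  have hsub : A ⊆ ⋃ y ∈ E, dynBall T n y (2 * ε) := by
    intro x hx
    have hsymm : ∀ y, ε < dynDist T n y x → ε < dynDist T n x y := by
      intro y h
      rw [lt_dynDist_iff T hε.le] at h ⊢
      obtain ⟨k, hk, h⟩ := h
      exact ⟨k, hk, by rwa [dist_comm]⟩
    have key : ∃ e ∈ E, dynDist T n e x ≤ ε := by
      by_contra! hcon
      have hxE : x ∉ E := by
        intro hxE
        have := (lt_dynDist_iff T hε.le).1 (hcon x hxE)
        obtain ⟨k, -, hk⟩ := this
        rw [dist_self] at hk
        linarith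
      have hgood : good (insert x E) := by
        refine ⟨?_, ?_⟩
        · rw [Finset.coe_insert]
          exact Set.insert_subset hx hE.1
        · intro y hy z hz hyz
          rcases Finset.mem_insert.1 hy with rfl | hyE
          · rcases Finset.mem_insert.1 hz with rfl | hz
            · exact absurd rfl hyz
            · exact hsymm z (hcon z hz)
          · rcases Finset.mem_insert.1 hz with rfl | hz
            · exact hcon y hyE
            · exact hE.2 y hyE z hz hyz
      have h1 : (insert x E).card ≤ sSup Sm := le_csSup hbdd ⟨_, hgood, rfl⟩
      rw [Finset.card_insert_of_notMem hxE, hEc] at h1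
      omega
    obtain ⟨e, he, h⟩ := key
    refine Set.mem_iUnion₂.2 ⟨e, he, ?_⟩
    exact lt_of_le_of_lt h (by linarith)
  calc μ A ≤ μ (⋃ y ∈ E, dynBall T n y (2 * ε)) := measure_mono hsub
    _ ≤ ∑ y ∈ E, μ (dynBall T n y (2 * ε)) := measure_biUnion_finset_le _ _
    _ ≤ ∑ y ∈ E, ENNReal.ofReal b := by
        refine Finset.sum_le_sum fun y hy => ?_
        have h1 : μ.real (dynBall T n y (2 * ε)) < b := not_le.1 (hE.1 hy)
        rw [← ofReal_measureReal (μ := μ)]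
        exact ENNReal.ofReal_le_ofReal h1.le
    _ = E.card * ENNReal.ofReal b := by rw [Finset.sum_const, nsmul_eq_mul]
    _ ≤ _ := by
        gcongr
        exact_mod_cast card_le_sepNum hT hε E hE.2

lemma lower (hT : Continuous T) (μ : Measure X) [IsProbabilityMeasure μ] {ε : ℝ} (hε : 0 < ε) :
    essSup (fun x => brinKatok T μ x (2 * ε)) μ ≤ sepEnt T univ ε := by
  refine EReal.le_of_forall_lt_iff_le.1 fun a ha => ?_
  obtain ⟨a', ha1, ha2⟩ := EReal.lt_iff_exists_real_btwn.1 ha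
  have ha2' : a' < a := by exact_mod_cast ha2
  set c := a - a' with hc
  have hcpos : 0 < c := sub_pos.2 ha2'
  have h1 := eventually_lt_of_limsup_lt (show limsup _ atTop < (a' : EReal) from ha1)
  obtain ⟨N, hN⟩ := eventually_atTop.1 (h1.and (eventually_ge_atTop 1))
  let A : ℕ → Set X := fun n => {x | ¬ Real.exp (-((n + N : ℕ) * a)) ≤
    μ.real (dynBall T (n + N) x (2 * ε))}
  have hA : ∀ n, μ (A n) ≤ ENNReal.ofReal (Real.exp (-c) ^ n) := by
    intro n
    obtain ⟨h2, h3⟩ := hN (n + N) (by omega)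
    have hpos : (0 : ℝ) < (n + N : ℕ) := by exact_mod_cast h3
    have h4 : Real.log (sepNum T (n + N) univ ε) / (n + N : ℕ) < a' := EReal.coe_lt_coe_iff.1 h2
    rw [div_lt_iff₀ hpos] at h4
    have h5 : (sepNum T (n + N) univ ε : ℝ) ≤ Real.exp (a' * (n + N : ℕ)) :=
      Real.le_exp_of_log_le h4.le
    refine (lower_aux hT μ hε (n + N) _).trans ?_
    rw [← ENNReal.ofReal_natCast, ← ENNReal.ofReal_mul (Nat.cast_nonneg _)]
    refine ENNReal.ofReal_le_ofReal ?_
    calc _ ≤ Real.exp (a' * (n + N : ℕ)) * Real.exp (-((n + N : ℕ) * a)) := by gcongr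
      _ = Real.exp ((n + N : ℕ) * (-c)) := by rw [← Real.exp_add, hc]; congr 1; ring
      _ ≤ Real.exp (n * (-c)) := by
          apply Real.exp_le_exp.2
          push_cast
          have : (0 : ℝ) ≤ N := Nat.cast_nonneg N
          nlinarith
      _ = _ := by rw [Real.exp_nat_mul]
  have hsum : ∑' n, μ (A n) ≠ ⊤ := by
    refine ne_top_of_le_ne_top ?_ (ENNReal.tsum_le_tsum hA)
    have hlt : Real.exp (-c) < 1 := by rw [Real.exp_lt_one_iff]; linarith
    exact (summable_geometric_of_lt_one (Real.exp_pos _).le hlt).tsum_ofReal_ne_top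
  have hbc := ae_eventually_notMem hsum
  refine essSup_le_of_ae_le _ ?_
  filter_upwards [hbc] with x hx
  refine limsup_le_of_le ⟨⊥, by simp⟩ ?_
  obtain ⟨k, hk⟩ := eventually_atTop.1 hx
  filter_upwards [eventually_ge_atTop (k + N)] with n hn
  have h2 := hk (n - N) (by omega)
  simp only [A, mem_setOf_eq, not_not] at h2
  rw [Nat.sub_add_cancel (by omega)] at h2
  exact (div_lt_imp μ _ (hN n (by omega)).2 a).2 h2

lemma cmp {F G : ℝ → EReal} {c : ℝ} (hc : 0 < c) (hG : ∀ ε, 0 ≤ G ε)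
    (h : ∀ ε > 0, F (c * ε) ≤ G ε) :
    liminf (fun ε : ℝ => F ε / ((Real.log (1 / ε) : ℝ) : EReal)) (𝓝[>] (0:ℝ)) ≤
    liminf (fun ε : ℝ => G ε / ((Real.log (1 / ε) : ℝ) : EReal)) (𝓝[>] (0:ℝ)) := by
  have hlog : Tendsto (fun ε : ℝ => Real.log (1 / ε)) (𝓝[>] 0) atTop := by
    simp only [one_div]
    exact Real.tendsto_log_atTop.comp tendsto_inv_nhdsGT_zero
  have hev : ∀ᶠ ε : ℝ in 𝓝[>] 0, 0 < ε := eventually_mem_nhdsWithin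
  have hG0 : 0 ≤ liminf (fun ε : ℝ => G ε / ((Real.log (1 / ε) : ℝ) : EReal)) (𝓝[>] (0:ℝ)) := by
    refine le_liminf_of_le ⟨⊤, by simp⟩ ?_
    filter_upwards [hlog.eventually_ge_atTop 0] with ε hε
    exact EReal.div_nonneg (hG ε) (by exact_mod_cast hε)
  refine EReal.ge_of_forall_gt_iff_ge.1 fun a ha => ?_
  rcases le_or_gt a 0 with ha0 | ha0
  · exact le_trans (by exact_mod_cast ha0) hG0
  refine EReal.ge_of_forall_gt_iff_ge.1 fun a' ha' => ?_
  have haa : a' < a := by exact_mod_cast ha'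
  rcases le_or_gt a' 0 with ha0' | ha0'
  · exact le_trans (by exact_mod_cast ha0') hG0
  have h1 := eventually_lt_of_lt_liminf ha
  have hmul : Tendsto (fun ε : ℝ => c * ε) (𝓝[>] 0) (𝓝[>] 0) := by
    refine tendsto_nhdsWithin_iff.2 ⟨?_, ?_⟩
    · have : Tendsto (fun ε : ℝ => c * ε) (𝓝 0) (𝓝 (c * 0)) := tendsto_id.const_mul c
      rw [mul_zero] at this
      exact this.mono_left nhdsWithin_le_nhds
    · filter_upwards [hev] with ε hε
      exact mul_pos hc hε
  have h2 := hmul.eventually h1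
  refine le_liminf_of_le ⟨⊤, by simp⟩ ?_
  filter_upwards [h2, hev, hlog.eventually_gt_atTop 0, (hlog.comp hmul).eventually_gt_atTop 0,
    hlog.eventually_ge_atTop (a * Real.log c / (a - a'))] with ε h3 hε h4 h5 h6
  simp only [Function.comp] at h5
  rw [EReal.le_div_iff_mul_le (by exact_mod_cast h4) (EReal.coe_ne_top _)]
  have h7 := ((EReal.le_div_iff_mul_le (by exact_mod_cast h5) (EReal.coe_ne_top _)).1 h3.le).trans
    (h ε hε)
  refine le_trans ?_ h7
  rw [← EReal.coe_mul, ← EReal.coe_mul, EReal.coe_le_coe_iff]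
  rw [div_le_iff₀ (by linarith)] at h6
  have h8 : Real.log (1 / (c * ε)) = Real.log (1 / ε) - Real.log c := by
    rw [one_div, one_div, Real.log_inv, Real.log_inv, Real.log_mul hc.ne' hε.ne']; ring
  rw [h8]
  linarith

end final

end BKVP

section Theorems

variable [MetricSpace X] [CompactSpace X] [Nonempty X] [MeasurableSpace X] [BorelSpace X]

/-- Variational principle for the lower metric mean dimension in terms of Brin-Katok
local entropy, where `h_μ^{BK}(ε)` is the μ-essential supremum of `x ↦ h_μ^{BK}(x, ε)`
(Theorem 5.2, second part). -/
theorem lower_mdim_eq_liminf_brinKatok (T : X → X) (hT : IsHomeomorph T) :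
    mdimLower T = liminf (fun ε : ℝ =>
      (⨆ μ ∈ ergodicMeasures T, essSup (fun x => brinKatok T μ x ε) μ)
        / ((Real.log (1 / ε) : ℝ) : EReal)) (𝓝[>] (0:ℝ)) := by
  have hTc : Continuous T := hT.continuous
  refine le_antisymm ?_ ?_
  · exact BKVP.cmp (F := fun ε => sepEnt T univ ε) (c := 6) (by norm_num)
      (fun ε => BKVP.gval_nonneg hTc ε) (fun ε hε => BKVP.upper hTc hε)
  · refine BKVP.cmp (G := fun ε => sepEnt T univ ε) (c := 2) (by norm_num)
      (fun ε => BKVP.sepEnt_nonneg T ε) (fun ε hε => ?_)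
    refine iSup₂_le fun μ hμ => ?_
    have hμp : IsProbabilityMeasure μ := hμ.1
    exact BKVP.lower hTc μ hε

end Theorems
end
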